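/- arXiv:1410.3889 — 10 statements merged into one kernel-verified Lean document; each statement's English description precedes it below -/
import Mathlib

section
/- Let V be a finite set with distinguished distinct vertices s, t ∈ V, let cap, dem : V × V → ℝ≥0 be symmetric functions vanishing on the diagonal, and let f : V → ℝ^m be a map with Σ_{u,v∈V} dem(u,v)·‖f(u)−f(v)‖₁ > 0. Then there exists a cut (S, V∖S) with ∅ ⊊ S ⊊ V such that Σ_{u∈S,v∈V∖S} dem(u,v) > 0 and sp(S) ≤ (Σ_{u,v∈V} cap(u,v)·‖f(u)−f(v)‖₁) / (Σ_{u,v∈V} dem(u,v)·‖f(u)−f(v)‖₁). Moreover, if f is st-sandwiching, then S can be chosen so that the cut (S, V∖S) is st-separating. -/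
/-- On a finite set of reals, the positive part of a difference is a nonnegative combination of
threshold indicators. -/
theorem exists_threshold_weights (A : Finset ℝ) :
    ∃ c : ℝ → ℝ, (∀ a, 0 ≤ c a) ∧ ∀ x ∈ A, ∀ y ∈ A,
      max (y - x) 0 = ∑ a ∈ A, if x < a ∧ a ≤ y then c a else 0 := by
  induction A using Finset.induction_on_max with
  | empty => exact ⟨0, by simp, by simp⟩
  | insert M A hM ih =>
    obtain ⟨c, hc, h⟩ := ih
    have hMA : M ∉ A := fun hmem => lt_irrefl _ (hM M hmem)
    rcases A.eq_empty_or_nonempty with rfl | hA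
    · exact ⟨0, by simp, by simp⟩
    set m := A.max' hA with hm
    have hmA : m ∈ A := A.max'_mem hA
    have hmM : m < M := hM m hmA
    refine ⟨Function.update c M (M - m), fun a => ?_, fun x hx y hy => ?_⟩
    · rcases eq_or_ne a M with rfl | ha
      · simpa using hmM.le
      · simpa [ha] using hc a
    rw [Finset.sum_insert hMA]
    have hcongr : (∑ a ∈ A, if x < a ∧ a ≤ y then Function.update c M (M - m) a else 0) =
        ∑ a ∈ A, if x < a ∧ a ≤ y then c a else 0 :=
      Finset.sum_congr rfl fun a ha => by
        rw [Function.update_of_ne (hM a ha).ne]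
    rw [hcongr, Function.update_self]
    rcases Finset.mem_insert.1 hx with rfl | hxA
    · have hzero : (∑ a ∈ A, if x < a ∧ a ≤ y then c a else 0) = 0 :=
        Finset.sum_eq_zero fun a ha => if_neg fun hlt => (hM a ha).not_gt hlt.1
      have hyx : y ≤ x := by
        rcases Finset.mem_insert.1 hy with rfl | hyA
        · exact le_rfl
        · exact (hM y hyA).le
      simp [hzero, hyx]
    rcases Finset.mem_insert.1 hy with rfl | hyA
    · have hxm : x ≤ m := A.le_max' x hxA
      have hsum : (∑ a ∈ A, if x < a ∧ a ≤ y then c a else 0) =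
          ∑ a ∈ A, if x < a ∧ a ≤ m then c a else 0 :=
        Finset.sum_congr rfl fun a ha => by
          simp [(hM a ha).le, hm, A.le_max' a ha]
      rw [hsum, ← h x hxA m hmA, if_pos ⟨hM x hxA, le_rfl⟩,
        max_eq_left (by linarith), max_eq_left (by linarith)]
      ring
    · rw [if_neg fun hle => (hM y hyA).not_ge hle.2, h x hxA y hyA, zero_add]

/-- For symmetric weights, the weighted total length of `g` is twice a combination of the weights
of its threshold cuts. -/
theorem sum_mul_abs_sub_eq_threshold_cuts {V : Type*} [Fintype V] [DecidableEq V]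
    (w : V → V → ℝ) (hw : ∀ u v, w u v = w v u) (g : V → ℝ) (A : Finset ℝ) (c : ℝ → ℝ)
    (hg : ∀ v, g v ∈ A)
    (hc : ∀ x ∈ A, ∀ y ∈ A, max (y - x) 0 = ∑ a ∈ A, if x < a ∧ a ≤ y then c a else 0) :
    ∑ u, ∑ v, w u v * |g u - g v| =
      2 * ∑ a ∈ A, c a * ∑ u with g u < a, ∑ v ∈ (Finset.univ.filter (g · < a))ᶜ, w u v := by
  have habs : ∀ x y : ℝ, |x - y| = max (y - x) 0 + max (x - y) 0 := fun x y => by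
    rcases le_total x y with h | h
    · rw [abs_of_nonpos (by linarith), max_eq_left (by linarith), max_eq_right (by linarith)]
      ring
    · rw [abs_of_nonneg (by linarith), max_eq_right (by linarith), max_eq_left (by linarith)]
      ring
  have hswap : ∑ u, ∑ v, w u v * max (g u - g v) 0 = ∑ u, ∑ v, w u v * max (g v - g u) 0 := by
    rw [Finset.sum_comm]
    exact Finset.sum_congr rfl fun u _ => Finset.sum_congr rfl fun v _ => by rw [hw]
  simp only [habs, mul_add, Finset.sum_add_distrib]
  rw [hswap, ← two_mul]
  congr 1
  calc ∑ u, ∑ v, w u v * max (g v - g u) 0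
      = ∑ u, ∑ v, ∑ a ∈ A, if g u < a ∧ a ≤ g v then c a * w u v else 0 := by
        refine Finset.sum_congr rfl fun u _ => Finset.sum_congr rfl fun v _ => ?_
        rw [hc _ (hg u) _ (hg v), Finset.mul_sum]
        exact Finset.sum_congr rfl fun a _ => by split_ifs <;> ring
    _ = ∑ a ∈ A, ∑ u, ∑ v, if g u < a ∧ a ≤ g v then c a * w u v else 0 := by
        simp_rw [Finset.sum_comm (t := A)]
    _ = _ := by
        refine Finset.sum_congr rfl fun a _ => ?_
        rw [Finset.mul_sum, Finset.sum_filter]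
        refine Finset.sum_congr rfl fun u _ => ?_
        rw [Finset.compl_filter, Finset.mul_sum, Finset.sum_filter]
        by_cases hu : g u < a <;> simp [hu]

/-- Some index with positive denominator attains at most the ratio of the weighted sums. -/
theorem exists_div_le_sum_div_sum {ι : Type*} (I : Finset ι) (c p q : ι → ℝ)
    (hc : ∀ k ∈ I, 0 ≤ c k) (hp : ∀ k ∈ I, 0 ≤ p k) (hq : ∀ k ∈ I, 0 ≤ q k)
    (hpos : 0 < ∑ k ∈ I, c k * q k) :
    ∃ k ∈ I, 0 < q k ∧ p k / q k ≤ (∑ k ∈ I, c k * p k) / ∑ k ∈ I, c k * q k := by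
  by_contra! hcon
  set R := (∑ k ∈ I, c k * p k) / ∑ k ∈ I, c k * q k with hR
  have hRq : ∑ k ∈ I, c k * (R * q k) = ∑ k ∈ I, c k * p k := by
    rw [← div_mul_cancel₀ (∑ k ∈ I, c k * p k) hpos.ne', ← hR, Finset.mul_sum]
    exact Finset.sum_congr rfl fun k _ => by ring
  have hlt : ∀ k ∈ I, 0 < q k → R * q k < p k := fun k hk hqk =>
    (lt_div_iff₀ hqk).1 (hcon k hk hqk)
  obtain ⟨k, hk, hkpos⟩ := Finset.exists_lt_of_sum_lt
    (f := fun _ => (0 : ℝ)) (s := I) (by simpa using hpos)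
  have hqk : 0 < q k := (hq k hk).lt_of_ne' fun h => by simp [h] at hkpos
  have hck : 0 < c k := (hc k hk).lt_of_ne' fun h => by simp [h] at hkpos
  refine hRq.not_lt (Finset.sum_lt_sum (fun j hj => ?_) ⟨k, hk, ?_⟩)
  · refine mul_le_mul_of_nonneg_left ?_ (hc j hj)
    rcases (hq j hj).eq_or_lt with h | h
    · simpa [← h] using hp j hj
    · exact (hlt j hj h).le
  · exact mul_lt_mul_of_pos_left (hlt k hk hqk) hck

/-- Lemma 2.2 (`lmm_l1`): sparse cuts via `ℓ₁`-embeddings.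
Given `f : V → ℝ^m` with positive demand-weighted total `ℓ₁`-length, there is a
cut `(S, V∖S)` of positive demand whose sparsity is at most the capacity/demand
ratio of the `ℓ₁`-lengths; moreover, if `f` is `st`-sandwiching then the cut can
be chosen `st`-separating. -/
theorem stmt0 {V : Type*} [Fintype V] [DecidableEq V] (s t : V) (hst : s ≠ t)
    (cap dem : V → V → ℝ)
    (hcap0 : ∀ u v, 0 ≤ cap u v) (hdem0 : ∀ u v, 0 ≤ dem u v)
    (hcapsym : ∀ u v, cap u v = cap v u) (hdemsym : ∀ u v, dem u v = dem v u)
    (hcapdiag : ∀ v, cap v v = 0) (hdemdiag : ∀ v, dem v v = 0)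
    (m : ℕ) (f : V → Fin m → ℝ)
    (hpos : 0 < ∑ u, ∑ v, dem u v * (∑ i, |f u i - f v i|)) :
    ∃ S : Finset V, S.Nonempty ∧ S ≠ Finset.univ ∧
      (0 < ∑ u ∈ S, ∑ v ∈ Sᶜ, dem u v) ∧
      (∑ u ∈ S, ∑ v ∈ Sᶜ, cap u v) / (∑ u ∈ S, ∑ v ∈ Sᶜ, dem u v) ≤
        (∑ u, ∑ v, cap u v * (∑ i, |f u i - f v i|)) /
          (∑ u, ∑ v, dem u v * (∑ i, |f u i - f v i|)) ∧
      ((∀ i : Fin m, ∀ v : V, f s i ≤ f v i ∧ f v i ≤ f t i) →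
        ((s ∈ S ∧ t ∉ S) ∨ (s ∉ S ∧ t ∈ S))) := by
  set A : Finset ℝ := Finset.univ.image fun p : V × Fin m => f p.1 p.2
  have hfA : ∀ i v, f v i ∈ A := fun i v => Finset.mem_image.2 ⟨(v, i), Finset.mem_univ _, rfl⟩
  obtain ⟨c, hc0, hc⟩ := exists_threshold_weights A
  let S : Fin m × ℝ → Finset V := fun k => Finset.univ.filter fun v => f v k.1 < k.2
  have hlen : ∀ w : V → V → ℝ, (∀ u v, w u v = w v u) →
      ∑ u, ∑ v, w u v * ∑ i, |f u i - f v i| =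
        2 * ∑ k ∈ Finset.univ ×ˢ A, c k.2 * ∑ u ∈ S k, ∑ v ∈ (S k)ᶜ, w u v := fun w hw => by
    rw [Finset.sum_product, Finset.mul_sum]
    simp_rw [Finset.mul_sum (s := (Finset.univ : Finset (Fin m)))]
    simp_rw [Finset.sum_comm (t := (Finset.univ : Finset (Fin m)))]
    exact Finset.sum_congr rfl fun i _ =>
      sum_mul_abs_sub_eq_threshold_cuts w hw (f · i) A c (hfA i) hc
  rw [hlen dem hdemsym] at hpos
  rw [hlen dem hdemsym, hlen cap hcapsym, mul_div_mul_left _ _ two_ne_zero]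
  have hcut : ∀ w : V → V → ℝ, (∀ u v, 0 ≤ w u v) → ∀ k : Fin m × ℝ,
      0 ≤ ∑ u ∈ S k, ∑ v ∈ (S k)ᶜ, w u v := fun w hw k =>
    Finset.sum_nonneg fun u _ => Finset.sum_nonneg fun v _ => hw u v
  obtain ⟨⟨i, a⟩, -, hdpos, hle⟩ := exists_div_le_sum_div_sum (Finset.univ ×ˢ A)
    (fun k => c k.2) _ _ (fun k _ => hc0 k.2) (fun k _ => hcut cap hcap0 k)
    (fun k _ => hcut dem hdem0 k) (pos_of_mul_pos_right hpos zero_le_two)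
  obtain ⟨u, hu, hupos⟩ := Finset.exists_ne_zero_of_sum_ne_zero hdpos.ne'
  obtain ⟨v, hv, -⟩ := Finset.exists_ne_zero_of_sum_ne_zero hupos
  rw [Finset.mem_compl] at hv
  refine ⟨S (i, a), ⟨u, hu⟩, fun h => hv (h ▸ Finset.mem_univ v), hdpos, hle, fun hsw => ?_⟩
  simp only [S, Finset.mem_filter, Finset.mem_univ, true_and, not_lt] at hu hv ⊢
  exact Or.inl ⟨(hsw i u).1.trans_lt hu, hv.trans (hsw i v).2⟩
end

section
/- Let d be an st-separating semi-metric on a finite set V with distinguished distinct points s, t ∈ V, and let A ⊆ V be nonempty. Then the map f_A^± : V → ℝ² is st-sandwiching: for each σ ∈ {+1,−1} and every v ∈ V, f_A^σ(s) ≤ f_A^σ(v) ≤ f_A^σ(t). -/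
/-- The distance to a finite nonempty set is 1-Lipschitz. -/
theorem inf'_dist_le_add {V : Type*} (d : V → V → ℝ)
    (htri : ∀ u v w, d u v ≤ d u w + d w v) (A : Finset V) (hA : A.Nonempty) (u v : V) :
    (A.inf' hA fun a => d u a) ≤ d u v + A.inf' hA fun a => d v a := by
  obtain ⟨a, ha, h⟩ := A.exists_mem_eq_inf' hA fun a => d v a
  rw [h]
  exact (Finset.inf'_le _ ha).trans (htri u a v)

/-- Proposition 2.10 (`prop_separation`): the map `f_A^±` is `st`-sandwiching,
i.e. for each sign `σ ∈ {+1, −1}` and every `v`,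
`f_A^σ(s) ≤ f_A^σ(v) ≤ f_A^σ(t)` where `f_A^σ(v) = (d(v,s) + σ·d(v,A))/2`. -/
theorem stmt4 {V : Type*} [Fintype V] (s t : V) (hst : s ≠ t)
    (d : V → V → ℝ) (hnn : ∀ u v, 0 ≤ d u v)
    (hsym : ∀ u v, d u v = d v u) (hdiag : ∀ v, d v v = 0)
    (htri : ∀ u v w, d u v ≤ d u w + d w v)
    (hsep : ∀ v, d s t = d s v + d v t)
    (A : Finset V) (hA : A.Nonempty) :
    ∀ σ : ℝ, (σ = 1 ∨ σ = -1) → ∀ v : V,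
      (d s s + σ * A.inf' hA fun a => d s a) / 2 ≤
          (d v s + σ * A.inf' hA fun a => d v a) / 2 ∧
        (d v s + σ * A.inf' hA fun a => d v a) / 2 ≤
          (d t s + σ * A.inf' hA fun a => d t a) / 2 := by
  intro σ hσ v
  have hsv := inf'_dist_le_add d htri A hA s v
  have hvs := inf'_dist_le_add d htri A hA v s
  have htv := inf'_dist_le_add d htri A hA t v
  have hvt := inf'_dist_le_add d htri A hA v t
  have hv := hsep v
  rw [hsym s v] at hsv hv
  rw [hsym t v] at htv
  rw [hdiag s, hsym t s]
  rcases hσ with rfl | rfl <;> constructor <;> linarith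
end

section
/- There exists a universal constant c > 0 such that the following holds. Let V be a finite set with |V| = n ≥ 2 and distinguished distinct vertices s, t ∈ V, let cap, dem : V × V → ℝ≥0 be symmetric functions vanishing on the diagonal, and let d be an st-separating semi-metric on V with Σ_{u,v∈V} dem(u,v)·d(u,v) > 0. Then there exists an st-separating cut (S, V∖S) with Σ_{u∈S,v∈V∖S} dem(u,v) > 0 and sparsity sp(S) ≤ c·(log n)·(Σ_{u,v∈V} cap(u,v)·d(u,v)) / (Σ_{u,v∈V} dem(u,v)·d(u,v)). (This is the mathematical content of the O(log n)-approximation for st-SparsestCut.) -/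
open Finset

section Coarea

variable {V : Type*} [Fintype V] [DecidableEq V]

/-- Coarea formula on an interval: `|a - b|` is the measure of the thresholds separating
`a` from `b`. -/
lemma integral_threshold_eq_abs_sub {m M a b : ℝ} (ha : m ≤ a) (hb : m ≤ b) (haM : a ≤ M)
    (hbM : b ≤ M) :
    MeasureTheory.IntegrableOn
        (fun θ : ℝ => if (a ≤ θ ∧ θ < b) ∨ (b ≤ θ ∧ θ < a) then (1 : ℝ) else 0) (Set.Ico m M) ∧
      ∫ θ in Set.Ico m M, (if (a ≤ θ ∧ θ < b) ∨ (b ≤ θ ∧ θ < a) then (1 : ℝ) else 0)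
        = |a - b| := by
  wlog hab : a ≤ b generalizing a b with H
  · have := H hb ha hbM haM (le_of_not_ge hab)
    rw [abs_sub_comm]
    simpa only [or_comm] using this
  have hfun : (fun θ : ℝ => if (a ≤ θ ∧ θ < b) ∨ (b ≤ θ ∧ θ < a) then (1 : ℝ) else 0)
      = (Set.Ico a b).indicator (fun _ => (1 : ℝ)) := by
    funext θ
    have : (b ≤ θ ∧ θ < a) ↔ False := by
      constructor
      · rintro ⟨h1, h2⟩; linarith
      · exact False.elim
    simp [Set.indicator, this]
  rw [hfun]
  have hsub : Set.Ico a b ∩ Set.Ico m M = Set.Ico a b :=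
    Set.inter_eq_left.2 (Set.Ico_subset_Ico ha hbM)
  constructor
  · apply MeasureTheory.Integrable.indicator _ measurableSet_Ico
    simp
  · rw [MeasureTheory.integral_indicator measurableSet_Ico,
      MeasureTheory.Measure.restrict_restrict measurableSet_Ico, hsub]
    simp [abs_sub_comm a b, abs_of_nonneg (sub_nonneg.2 hab), hab]

/-- A symmetric (signed) weight that is nonnegative on all `st`-cuts is nonnegative on the
line metric of every function minimal at `s` and maximal at `t`. -/
lemma sum_mul_abs_sub_nonneg_of_cut_nonneg {s t : V} {w : V → V → ℝ}
    (hw : ∀ u v, w u v = w v u)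
    (hcut : ∀ S : Finset V, s ∈ S → t ∉ S → 0 ≤ ∑ u ∈ S, ∑ v ∈ Sᶜ, w u v)
    {g : V → ℝ} (hs : ∀ v, g s ≤ g v) (ht : ∀ v, g v ≤ g t) :
    0 ≤ ∑ u, ∑ v, w u v * |g u - g v| := by
  have key := fun u v => integral_threshold_eq_abs_sub (hs u) (hs v) (ht u) (ht v)
  have hint : ∑ u, ∑ v, w u v * |g u - g v| = ∫ θ in Set.Ico (g s) (g t), ∑ u, ∑ v, w u v *
      (if (g u ≤ θ ∧ θ < g v) ∨ (g v ≤ θ ∧ θ < g u) then (1 : ℝ) else 0) := by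
    rw [MeasureTheory.integral_finsetSum]
    · refine sum_congr rfl fun u _ => ?_
      rw [MeasureTheory.integral_finsetSum]
      · refine sum_congr rfl fun v _ => ?_
        rw [MeasureTheory.integral_const_mul, (key u v).2]
      · exact fun v _ => (key u v).1.const_mul _
    · exact fun u _ => MeasureTheory.integrable_finsetSum _ fun v _ => (key u v).1.const_mul _
  rw [hint]
  refine MeasureTheory.setIntegral_nonneg measurableSet_Ico fun θ hθ => ?_
  set S : Finset V := univ.filter fun v => g v ≤ θ with hS
  have hS0 := hcut S (by simpa [hS] using hθ.1) (by simpa [hS] using hθ.2)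
  have hsplit : ∑ u, ∑ v, w u v *
      (if (g u ≤ θ ∧ θ < g v) ∨ (g v ≤ θ ∧ θ < g u) then (1 : ℝ) else 0)
      = (∑ u ∈ S, ∑ v ∈ Sᶜ, w u v) + ∑ u ∈ Sᶜ, ∑ v ∈ S, w u v := by
    rw [← sum_add_sum_compl S]
    congr 1
    · refine sum_congr rfl fun u hu => ?_
      have hu' : g u ≤ θ := by simpa [hS] using hu
      rw [hS, compl_filter, sum_filter]
      refine sum_congr rfl fun v _ => ?_
      simp [hu', not_lt.2 hu']
    · refine sum_congr rfl fun u hu => ?_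
      have hu' : θ < g u := by simpa [hS] using hu
      rw [hS, sum_filter]
      refine sum_congr rfl fun v _ => ?_
      simp [hu', not_le.2 hu']
  rw [hsplit]
  have hswap : ∑ u ∈ Sᶜ, ∑ v ∈ S, w u v = ∑ u ∈ S, ∑ v ∈ Sᶜ, w u v := by
    rw [sum_comm]
    exact sum_congr rfl fun u _ => sum_congr rfl fun v _ => hw v u
  linarith

/-- Some `st`-cut is at least as sparse as the line metric of a function minimal at `s` and
maximal at `t`. -/
lemma exists_cut_mul_le {s t : V} {cap dem : V → V → ℝ}
    (hcap : ∀ u v, 0 ≤ cap u v) (hdem : ∀ u v, 0 ≤ dem u v)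
    (hcs : ∀ u v, cap u v = cap v u) (hds : ∀ u v, dem u v = dem v u)
    {g : V → ℝ} (hs : ∀ v, g s ≤ g v) (ht : ∀ v, g v ≤ g t)
    (hpos : 0 < ∑ u, ∑ v, dem u v * |g u - g v|) :
    ∃ S : Finset V, s ∈ S ∧ t ∉ S ∧ 0 < ∑ u ∈ S, ∑ v ∈ Sᶜ, dem u v ∧
      (∑ u ∈ S, ∑ v ∈ Sᶜ, cap u v) / (∑ u ∈ S, ∑ v ∈ Sᶜ, dem u v) *
        (∑ u, ∑ v, dem u v * |g u - g v|) ≤ ∑ u, ∑ v, cap u v * |g u - g v| := by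
  set T : Finset (Finset V) := univ.filter fun S =>
    s ∈ S ∧ t ∉ S ∧ 0 < ∑ u ∈ S, ∑ v ∈ Sᶜ, dem u v with hT
  have hTne : T.Nonempty := by
    by_contra hne
    rw [not_nonempty_iff_eq_empty] at hne
    have h := sum_mul_abs_sub_nonneg_of_cut_nonneg (s := s) (t := t) (w := fun u v => -dem u v)
      (fun u v => by rw [hds]) (fun S h1 h2 => by
        have h3 : S ∉ T := by simp [hne]
        have h4 : ¬ 0 < ∑ u ∈ S, ∑ v ∈ Sᶜ, dem u v := by
          intro h; exact h3 (by simp only [hT, mem_filter, mem_univ, true_and]; exact ⟨h1, h2, h⟩)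
        simp only [sum_neg_distrib]
        linarith) hs ht
    simp only [neg_mul, sum_neg_distrib] at h
    linarith
  obtain ⟨S, hST, hmin⟩ := exists_min_image T
    (fun S => (∑ u ∈ S, ∑ v ∈ Sᶜ, cap u v) / (∑ u ∈ S, ∑ v ∈ Sᶜ, dem u v)) hTne
  have hS : s ∈ S ∧ t ∉ S ∧ 0 < ∑ u ∈ S, ∑ v ∈ Sᶜ, dem u v := by simpa [hT] using hST
  refine ⟨S, hS.1, hS.2.1, hS.2.2, ?_⟩
  set K := (∑ u ∈ S, ∑ v ∈ Sᶜ, cap u v) / (∑ u ∈ S, ∑ v ∈ Sᶜ, dem u v)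
  have h := sum_mul_abs_sub_nonneg_of_cut_nonneg (s := s) (t := t)
    (w := fun u v => cap u v - K * dem u v)
    (fun u v => by rw [hds, hcs]) (fun R h1 h2 => by
      simp only [sum_sub_distrib, ← mul_sum]
      have hc0 : 0 ≤ ∑ u ∈ R, ∑ v ∈ Rᶜ, cap u v :=
        sum_nonneg fun u _ => sum_nonneg fun v _ => hcap u v
      have hd0 : 0 ≤ ∑ u ∈ R, ∑ v ∈ Rᶜ, dem u v :=
        sum_nonneg fun u _ => sum_nonneg fun v _ => hdem u v
      rcases hd0.eq_or_lt with h0 | h0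
      · rw [← h0]; simpa using hc0
      · have := hmin R (by simp only [hT, mem_filter, mem_univ, true_and]; exact ⟨h1, h2, h0⟩)
        rw [le_div_iff₀ h0] at this
        linarith) hs ht
  simp only [sub_mul, sum_sub_distrib, mul_assoc, ← mul_sum] at h
  linarith

end Coarea

section RandomSubset

variable {V : Type*} [Fintype V] [DecidableEq V]

/-- The probability of `A` as a random subset containing each point independently with
probability `p`. -/
def subsetWeight (p : ℝ) (A : Finset V) : ℝ := p ^ #A * (1 - p) ^ #Aᶜ

lemma subsetWeight_nonneg {p : ℝ} (h0 : 0 ≤ p) (h1 : p ≤ 1) (A : Finset V) :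
    0 ≤ subsetWeight p A :=
  mul_nonneg (pow_nonneg h0 _) (pow_nonneg (sub_nonneg.2 h1) _)

/-- The random subset avoids `U` with probability `(1 - p) ^ #U`. -/
lemma sum_subsetWeight_disjoint (p : ℝ) (U : Finset V) :
    ∑ A with Disjoint A U, subsetWeight p A = (1 - p) ^ #U := by
  have hset : (univ.filter fun A : Finset V => Disjoint A U) = Uᶜ.powerset := by
    ext A
    simp [subset_compl_iff_disjoint_right]
  have hsum := sum_pow_mul_eq_add_pow p (1 - p) Uᶜ
  rw [add_sub_cancel, one_pow] at hsum
  have hmul : (1 - p) ^ #U = (1 - p) ^ #U *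
      ∑ A ∈ Uᶜ.powerset, p ^ #A * (1 - p) ^ (#Uᶜ - #A) := by rw [hsum, mul_one]
  rw [hset, hmul, mul_sum]
  refine sum_congr rfl fun A hA => ?_
  have hcard := card_le_card (mem_powerset.1 hA)
  have h1 := card_compl_add_card U
  have h2 := card_compl_add_card A
  rw [subsetWeight, show #Aᶜ = #U + (#Uᶜ - #A) by omega, pow_add]
  ring

lemma sum_subsetWeight (p : ℝ) : ∑ A : Finset V, subsetWeight p A = 1 := by
  simpa using sum_subsetWeight_disjoint p (∅ : Finset V)

/-- The random subset avoids `U` and meets a disjoint set `W` with the expected probability. -/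
lemma sum_subsetWeight_disjoint_not_disjoint (p : ℝ) {U W : Finset V} (h : Disjoint U W) :
    ∑ A with Disjoint A U ∧ ¬ Disjoint A W, subsetWeight p A
      = (1 - p) ^ #U * (1 - (1 - p) ^ #W) := by
  have h1 := sum_subsetWeight_disjoint p U
  have h2 := sum_subsetWeight_disjoint p (U ∪ W)
  have h3 := sum_filter_add_sum_filter_not (univ.filter fun A : Finset V => Disjoint A U)
    (fun A => Disjoint A W) (subsetWeight p)
  rw [filter_filter, filter_filter] at h3
  simp only [disjoint_union_right] at h2
  rw [card_union_of_disjoint h, pow_add] at h2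
  linarith

lemma one_tenth_le_miss_mul_hit {j a b : ℕ} (ha : a < 2 ^ (j + 1)) (hb : 2 ^ j ≤ b) :
    (1 / 10 : ℝ) ≤ (1 - 1 / 2 ^ (j + 2)) ^ a * (1 - (1 - 1 / 2 ^ (j + 2)) ^ b) := by
  set p : ℝ := 1 / 2 ^ (j + 2) with hp
  have hpow : (0 : ℝ) < 2 ^ (j + 2) := by positivity
  have hp0 : 0 < p := by positivity
  have hpj : p * 2 ^ j = 1 / 4 := by rw [hp, pow_add]; field_simp; norm_num
  have hp1 : p ≤ 1 := by
    rw [hp, div_le_one hpow]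
    exact one_le_pow₀ (by norm_num)
  have ha' : (a : ℝ) ≤ 2 * 2 ^ j := by
    have : a ≤ 2 * 2 ^ j := by rw [pow_succ] at ha; omega
    exact_mod_cast this
  have hb' : (2 : ℝ) ^ j ≤ b := by exact_mod_cast hb
  have hmiss : (1 / 2 : ℝ) ≤ (1 - p) ^ a := by
    have := one_add_mul_le_pow (a := -p) (by linarith) a
    rw [← sub_eq_add_neg] at this
    nlinarith
  have hhit : (1 - p) ^ b ≤ 4 / 5 := by
    have h1 := one_add_mul_le_pow (a := p) (by linarith) b
    have h2 : (1 - p) ^ b * (1 + p) ^ b ≤ 1 := by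
      rw [← mul_pow]
      exact pow_le_one₀ (by nlinarith) (by nlinarith)
    have h3 : 0 ≤ (1 - p) ^ b := pow_nonneg (by linarith) _
    have h4 : (5 / 4 : ℝ) ≤ (1 + p) ^ b := by nlinarith
    nlinarith
  nlinarith

end RandomSubset

section Bourgain

variable {V : Type*} {d : V → V → ℝ}

/-- The distance from `v` to `A`, with value `0` for empty `A`. -/
noncomputable def distToSet (d : V → V → ℝ) (A : Finset V) (v : V) : ℝ :=
  if h : A.Nonempty then A.inf' h (d v) else 0

lemma distToSet_le {A : Finset V} {a : V} (ha : a ∈ A) (v : V) : distToSet d A v ≤ d v a := by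
  rw [distToSet, dif_pos ⟨a, ha⟩]
  exact inf'_le _ ha

lemma le_distToSet {A : Finset V} (hA : A.Nonempty) {v : V} {r : ℝ} (h : ∀ a ∈ A, r ≤ d v a) :
    r ≤ distToSet d A v := by
  rw [distToSet, dif_pos hA]
  exact le_inf' _ _ h

lemma distToSet_le_add (hnn : ∀ u v, 0 ≤ d u v) (htri : ∀ u v w, d u v ≤ d u w + d w v)
    (A : Finset V) (u v : V) : distToSet d A u ≤ d u v + distToSet d A v := by
  by_cases hA : A.Nonempty
  · rw [← sub_le_iff_le_add']
    refine le_distToSet hA fun a ha => ?_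
    linarith [distToSet_le (d := d) ha u, htri u a v]
  · simp [distToSet, hA, hnn]

variable [Fintype V]

/-- The smallest radius at which the closed ball has at least `k` points. -/
lemma exists_radius_card_ball (hnn : ∀ u v, 0 ≤ d u v) (x : V) {k : ℕ} (hk : 1 ≤ k)
    (hkn : k ≤ Fintype.card V) :
    ∃ r, 0 ≤ r ∧ k ≤ #{y | d x y ≤ r} ∧ #{y | d x y < r} < k := by
  have hne : (univ.filter fun z => k ≤ #{y | d x y ≤ d x z}).Nonempty := by
    obtain ⟨z, -, hz⟩ := exists_max_image univ (d x) ⟨x, mem_univ x⟩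
    refine ⟨z, ?_⟩
    simp only [mem_filter, mem_univ, true_and]
    rwa [filter_true_of_mem fun y hy => hz y hy]
  obtain ⟨z, hz, hmin⟩ := exists_min_image _ (d x) hne
  refine ⟨d x z, hnn x z, (mem_filter.1 hz).2, ?_⟩
  by_contra! hcard
  obtain ⟨y, hy, hmax⟩ := exists_max_image (univ.filter fun y => d x y < d x z) (d x)
    (card_pos.1 (by omega))
  have hle : k ≤ #{y' | d x y' ≤ d x y} :=
    hcard.trans (card_le_card fun y' hy' => by simpa using hmax y' hy')
  have := hmin y (by simpa using hle)
  have := (mem_filter.1 hy).2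
  linarith

/-- A radius, truncated at `D`, at which the balls around `u` and `v` both reach `k` points. -/
lemma exists_common_radius (hnn : ∀ u v, 0 ≤ d u v) (u v : V) {D : ℝ} (hD : 0 ≤ D) {k : ℕ}
    (hk : 1 ≤ k) :
    ∃ r, 0 ≤ r ∧ r ≤ D ∧ (r = D ∨ (k ≤ #{y | d u y ≤ r} ∧ k ≤ #{y | d v y ≤ r})) ∧
      (#{y | d u y < r} < k ∨ #{y | d v y < r} < k) := by
  by_cases hkn : k ≤ Fintype.card V
  · obtain ⟨ru, hru, hcu, hou⟩ := exists_radius_card_ball hnn u hk hkn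
    obtain ⟨rv, hrv, hcv, hov⟩ := exists_radius_card_ball hnn v hk hkn
    refine ⟨min D (max ru rv), by positivity, min_le_left _ _, ?_, ?_⟩
    · rcases le_total D (max ru rv) with h | h
      · exact Or.inl (min_eq_left h)
      · right
        rw [min_eq_right h]
        constructor
        · refine hcu.trans (card_le_card (monotone_filter_right _ fun y _ hy => ?_))
          exact le_trans hy (le_max_left _ _)
        · refine hcv.trans (card_le_card (monotone_filter_right _ fun y _ hy => ?_))
          exact le_trans hy (le_max_right _ _)
    · rcases le_total ru rv with h | h
      · right
        rw [max_eq_right h]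
        refine (card_le_card (monotone_filter_right _ fun y _ hy => ?_)).trans_lt hov
        exact lt_of_lt_of_le hy (min_le_right _ _)
      · left
        rw [max_eq_left h]
        refine (card_le_card (monotone_filter_right _ fun y _ hy => ?_)).trans_lt hou
        exact lt_of_lt_of_le hy (min_le_right _ _)
  · exact ⟨D, hD, le_rfl, Or.inl rfl, Or.inl ((card_le_univ _).trans_lt (not_le.1 hkn))⟩

variable [DecidableEq V]

/-- One scale of Bourgain's argument. -/
lemma sub_le_sum_subsetWeight_mul_abs (hsymm : ∀ u v, d u v = d v u)
    (htri : ∀ u v w, d u v ≤ d u w + d w v) {u v : V} {r R : ℝ} (hrR : r < R)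
    (hsep : r + R ≤ d u v) {j : ℕ} (hlarge : 2 ^ j ≤ #{y | d v y ≤ r})
    (hsmall : #{y | d u y < R} < 2 ^ (j + 1)) :
    (R - r) / 10 ≤ ∑ A : Finset V, subsetWeight (1 / 2 ^ (j + 2)) A *
      |distToSet d A u - distToSet d A v| := by
  set p : ℝ := 1 / 2 ^ (j + 2) with hp
  have hp0 : 0 ≤ p := by positivity
  have hp1 : p ≤ 1 := by
    rw [hp, div_le_one (by positivity)]
    exact one_le_pow₀ (by norm_num)
  set U : Finset V := {y | d u y < R} with hU
  set W : Finset V := {y | d v y ≤ r} with hW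
  have hUW : Disjoint U W := by
    rw [disjoint_left]
    intro y hyU hyW
    have h1 : d u y < R := by simpa [hU] using hyU
    have h2 : d v y ≤ r := by simpa [hW] using hyW
    linarith [htri u v y, hsymm v y]
  have hprob := one_tenth_le_miss_mul_hit hsmall hlarge
  rw [← hp, ← sum_subsetWeight_disjoint_not_disjoint p hUW] at hprob
  calc (R - r) / 10 = 1 / 10 * (R - r) := by ring
    _ ≤ (∑ A with Disjoint A U ∧ ¬ Disjoint A W, subsetWeight p A) * (R - r) :=
        mul_le_mul_of_nonneg_right hprob (by linarith)
    _ = ∑ A with Disjoint A U ∧ ¬ Disjoint A W, subsetWeight p A * (R - r) := sum_mul ..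
    _ ≤ ∑ A with Disjoint A U ∧ ¬ Disjoint A W, subsetWeight p A *
          |distToSet d A u - distToSet d A v| := by
        refine sum_le_sum fun A hA => ?_
        refine mul_le_mul_of_nonneg_left ?_ (subsetWeight_nonneg hp0 hp1 A)
        obtain ⟨hAU, hAW⟩ := (mem_filter.1 hA).2
        obtain ⟨a, haA, haW⟩ := not_disjoint_iff.1 hAW
        have h1 : distToSet d A v ≤ r :=
          (distToSet_le haA v).trans (by simpa [hW] using haW)
        have h2 : R ≤ distToSet d A u := by
          refine le_distToSet ⟨a, haA⟩ fun b hb => ?_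
          have := disjoint_left.1 hAU hb
          simpa [hU] using this
        exact le_trans (by linarith) (le_abs_self _)
    _ ≤ _ := sum_le_sum_of_subset_of_nonneg (filter_subset _ _) fun A _ _ =>
        mul_nonneg (subsetWeight_nonneg hp0 hp1 A) (abs_nonneg _)

/-- Bourgain's lower bound: summed over `L` scales, the expected difference of the distances to
a random set is a constant fraction of the distance. -/
lemma dist_le_sum_scales (hnn : ∀ u v, 0 ≤ d u v) (hsymm : ∀ u v, d u v = d v u)
    (hself : ∀ v, d v v = 0) (htri : ∀ u v w, d u v ≤ d u w + d w v) {L : ℕ}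
    (hL : Fintype.card V < 2 ^ L) (u v : V) :
    d u v / 40 ≤ ∑ j ∈ range L, ∑ A : Finset V, subsetWeight (1 / 2 ^ (j + 2)) A *
      |distToSet d A u - distToSet d A v| := by
  have hD : 0 ≤ d u v / 4 := by linarith [hnn u v]
  choose ρ hρ0 hρD hlarge hsmall using fun j : ℕ =>
    exists_common_radius hnn u v hD (k := 2 ^ j) Nat.one_le_two_pow
  have hzero : ρ 0 ≤ 0 := by
    rcases hsmall 0 with h | h
    · have := card_eq_zero.1 (Nat.lt_one_iff.1 h)
      simpa [hself] using filter_eq_empty_iff.1 this (mem_univ u)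
    · have := card_eq_zero.1 (Nat.lt_one_iff.1 h)
      simpa [hself] using filter_eq_empty_iff.1 this (mem_univ v)
  have hlast : ρ L = d u v / 4 := by
    refine (hlarge L).resolve_right fun h => ?_
    exact absurd (h.1.trans (card_le_univ _)) (not_le.2 hL)
  have hscale : ∀ j, (ρ (j + 1) - ρ j) / 10 ≤ ∑ A : Finset V,
      subsetWeight (1 / 2 ^ (j + 2)) A * |distToSet d A u - distToSet d A v| := by
    intro j
    rcases le_or_gt (ρ (j + 1)) (ρ j) with hle | hlt
    · refine le_trans (by linarith) (sum_nonneg fun A _ => mul_nonneg ?_ (abs_nonneg _))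
      refine subsetWeight_nonneg (by positivity) ?_ A
      rw [div_le_one (by positivity)]
      exact one_le_pow₀ (by norm_num)
    · have hbig := (hlarge j).resolve_left (by linarith [hρD (j + 1)])
      have hsep : ρ j + ρ (j + 1) ≤ d u v := by
        linarith [hρD j, hρD (j + 1), hnn u v]
      rcases hsmall (j + 1) with h | h
      · exact sub_le_sum_subsetWeight_mul_abs hsymm htri hlt hsep hbig.2 h
      · simp only [abs_sub_comm (distToSet d _ u)]
        exact sub_le_sum_subsetWeight_mul_abs hsymm htri hlt (hsymm u v ▸ hsep) hbig.1 h
  calc d u v / 40 ≤ (ρ L - ρ 0) / 10 := by rw [hlast]; linarith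
    _ = ∑ j ∈ range L, (ρ (j + 1) - ρ j) / 10 := by rw [← sum_div, sum_range_sub]
    _ ≤ _ := sum_le_sum fun j _ => hscale j

/-- Averaged form of Bourgain's theorem: a single distance function captures a `1 / O(L)`
fraction of the demand-weighted total distance. -/
lemma exists_distToSet_le (hnn : ∀ u v, 0 ≤ d u v) (hsymm : ∀ u v, d u v = d v u)
    (hself : ∀ v, d v v = 0) (htri : ∀ u v w, d u v ≤ d u w + d w v) {L : ℕ}
    (hL : Fintype.card V < 2 ^ L) {dem : V → V → ℝ} (hdem : ∀ u v, 0 ≤ dem u v) :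
    ∃ A : Finset V, ∑ u, ∑ v, dem u v * d u v ≤
      40 * L * ∑ u, ∑ v, dem u v * |distToSet d A u - distToSet d A v| := by
  set Φ : Finset V → ℝ := fun A => ∑ u, ∑ v, dem u v * |distToSet d A u - distToSet d A v|
    with hΦ
  obtain ⟨A, -, hA⟩ := exists_max_image univ Φ ⟨∅, mem_univ _⟩
  refine ⟨A, ?_⟩
  have hbound : ∑ u, ∑ v, dem u v * (d u v / 40) ≤
      ∑ j ∈ range L, ∑ B : Finset V, subsetWeight (1 / 2 ^ (j + 2)) B * Φ B := by
    calc ∑ u, ∑ v, dem u v * (d u v / 40) ≤ ∑ u, ∑ v, dem u v * ∑ j ∈ range L,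
          ∑ B : Finset V, subsetWeight (1 / 2 ^ (j + 2)) B *
            |distToSet d B u - distToSet d B v| :=
          sum_le_sum fun u _ => sum_le_sum fun v _ => mul_le_mul_of_nonneg_left
            (dist_le_sum_scales hnn hsymm hself htri hL u v) (hdem u v)
      _ = ∑ u, ∑ j ∈ range L, ∑ B : Finset V, ∑ v, dem u v *
            (subsetWeight (1 / 2 ^ (j + 2)) B * |distToSet d B u - distToSet d B v|) := by
          refine sum_congr rfl fun u _ => ?_
          simp only [mul_sum]
          rw [sum_comm]
          exact sum_congr rfl fun j _ => sum_comm
      _ = _ := by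
          rw [sum_comm]
          refine sum_congr rfl fun j _ => ?_
          rw [sum_comm]
          refine sum_congr rfl fun B _ => ?_
          simp only [hΦ, mul_sum]
          exact sum_congr rfl fun u _ => sum_congr rfl fun v _ => mul_left_comm _ _ _
  have hmax : ∑ j ∈ range L, ∑ B : Finset V, subsetWeight (1 / 2 ^ (j + 2)) B * Φ B
      ≤ L * Φ A := by
    calc _ ≤ ∑ j ∈ range L, Φ A := by
          refine sum_le_sum fun j _ => ?_
          calc _ ≤ ∑ B : Finset V, subsetWeight (1 / 2 ^ (j + 2)) B * Φ A := by
                refine sum_le_sum fun B _ => mul_le_mul_of_nonneg_left (hA B (mem_univ B)) ?_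
                refine subsetWeight_nonneg (by positivity) ?_ B
                rw [div_le_one (by positivity)]
                exact one_le_pow₀ (by norm_num)
            _ = Φ A := by rw [← sum_mul, sum_subsetWeight, one_mul]
      _ = L * Φ A := by simp
  simp only [mul_div_assoc', ← sum_div] at hbound
  linarith

end Bourgain

/-- Shifting a `1`-Lipschitz function by `±d(s, ·)` makes it minimal at `s` and maximal at `t`
without losing demand-weighted length. -/
lemma exists_st_monotone_lipschitz {V : Type*} [Fintype V] {d dem : V → V → ℝ} {s t : V}
    (hsymm : ∀ u v, d u v = d v u) (hself : ∀ v, d v v = 0)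
    (htri : ∀ u v w, d u v ≤ d u w + d w v) (hst : ∀ v, d s t = d s v + d v t)
    (hdem : ∀ u v, 0 ≤ dem u v) {f : V → ℝ} (hf : ∀ u v, f u ≤ d u v + f v) :
    ∃ g : V → ℝ, (∀ v, g s ≤ g v) ∧ (∀ v, g v ≤ g t) ∧ (∀ u v, |g u - g v| ≤ 2 * d u v) ∧
      ∑ u, ∑ v, dem u v * |f u - f v| ≤ ∑ u, ∑ v, dem u v * |g u - g v| := by
  have hsum : 2 * ∑ u, ∑ v, dem u v * |f u - f v| ≤
      (∑ u, ∑ v, dem u v * |(d s u + f u) - (d s v + f v)|) +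
        ∑ u, ∑ v, dem u v * |(d s u - f u) - (d s v - f v)| := by
    simp only [mul_sum, ← sum_add_distrib]
    refine sum_le_sum fun u _ => sum_le_sum fun v _ => ?_
    rw [mul_left_comm, ← mul_add]
    refine mul_le_mul_of_nonneg_left ?_ (hdem u v)
    have := abs_sub ((d s u + f u) - (d s v + f v)) ((d s u - f u) - (d s v - f v))
    rw [show (d s u + f u) - (d s v + f v) - ((d s u - f u) - (d s v - f v))
      = 2 * (f u - f v) by ring, abs_mul, abs_two] at this
    exact this
  rcases le_total (∑ u, ∑ v, dem u v * |f u - f v|)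
    (∑ u, ∑ v, dem u v * |(d s u + f u) - (d s v + f v)|) with h | h
  · refine ⟨fun v => d s v + f v, fun v => ?_, fun v => ?_, fun u v => ?_, h⟩
    · linarith [hf s v, hself s]
    · linarith [hf v t, hst v]
    · rw [abs_le]
      constructor <;>
        linarith [hf u v, hf v u, htri s u v, htri s v u, hsymm u v]
  · refine ⟨fun v => d s v - f v, fun v => ?_, fun v => ?_, fun u v => ?_, by linarith⟩
    · linarith [hf v s, hself s, hsymm v s]
    · linarith [hf t v, hst v, hsymm v t]
    · rw [abs_le]
      constructor <;>
        linarith [hf u v, hf v u, htri s u v, htri s v u, hsymm u v]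

lemma log_two_add_one_le_four_mul_log {n : ℕ} (hn : 2 ≤ n) :
    ((Nat.log 2 n + 1 : ℕ) : ℝ) ≤ 4 * Real.log n := by
  have hlog2 := Real.log_two_gt_d9
  have h1 : (Nat.log 2 n : ℝ) * Real.log 2 ≤ Real.log n := by
    rw [← Real.log_pow]
    exact Real.log_le_log (by positivity) (by exact_mod_cast Nat.pow_log_le_self 2 (by omega))
  have h2 : (1 : ℝ) ≤ Nat.log 2 n := by
    exact_mod_cast Nat.log_pos (by norm_num) hn
  push_cast
  nlinarith


/-- Mathematical content of Theorem 3.1 (`thm_lr`, the `O(log n)`-approximation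
for `st`-SparsestCut): there is a universal constant `c > 0` such that for any
`st`-separating semi-metric `d` of positive demand-weighted total length on an
`n`-point set (`n ≥ 2`), there is an `st`-separating cut of positive demand
whose sparsity is at most `c · log n` times the ratio
`(Σ cap·d)/(Σ dem·d)`. -/
theorem stmt6 : ∃ c : ℝ, 0 < c ∧
    ∀ (V : Type) [Fintype V] [DecidableEq V] (s t : V), s ≠ t →
    2 ≤ Fintype.card V →
    ∀ (cap dem : V → V → ℝ),
    (∀ u v, 0 ≤ cap u v) → (∀ u v, 0 ≤ dem u v) →
    (∀ u v, cap u v = cap v u) → (∀ u v, dem u v = dem v u) →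
    (∀ v, cap v v = 0) → (∀ v, dem v v = 0) →
    ∀ (d : V → V → ℝ),
    (∀ u v, 0 ≤ d u v) → (∀ u v, d u v = d v u) → (∀ v, d v v = 0) →
    (∀ u v w, d u v ≤ d u w + d w v) →
    (∀ v, d s t = d s v + d v t) →
    (0 < ∑ u, ∑ v, dem u v * d u v) →
    ∃ S : Finset V, S.Nonempty ∧ S ≠ Finset.univ ∧
      ((s ∈ S ∧ t ∉ S) ∨ (s ∉ S ∧ t ∈ S)) ∧
      (0 < ∑ u ∈ S, ∑ v ∈ Sᶜ, dem u v) ∧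
      (∑ u ∈ S, ∑ v ∈ Sᶜ, cap u v) / (∑ u ∈ S, ∑ v ∈ Sᶜ, dem u v) ≤
        c * Real.log (Fintype.card V) *
          ((∑ u, ∑ v, cap u v * d u v) / (∑ u, ∑ v, dem u v * d u v)) := by
  refine ⟨320, by norm_num, ?_⟩
  intro V _ _ s t _ hn cap dem hcap hdem hcs hds _ _ d hnn hsymm hself htri hst hpos
  obtain ⟨A, hA⟩ := exists_distToSet_le hnn hsymm hself htri
    (Nat.lt_pow_succ_log_self one_lt_two (Fintype.card V)) hdem
  obtain ⟨g, hgs, hgt, hglip, hgdem⟩ := exists_st_monotone_lipschitz hsymm hself htri hst hdem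
    (distToSet_le_add hnn htri A)
  set X := ∑ u, ∑ v, dem u v * d u v
  set Y := ∑ u, ∑ v, cap u v * d u v
  set P := ∑ u, ∑ v, dem u v * |distToSet d A u - distToSet d A v|
  set Q := ∑ u, ∑ v, dem u v * |g u - g v|
  have hL := log_two_add_one_le_four_mul_log hn
  have hP : 0 ≤ P :=
    Finset.sum_nonneg fun u _ => Finset.sum_nonneg fun v _ => mul_nonneg (hdem u v) (abs_nonneg _)
  have hlog : 0 ≤ Real.log (Fintype.card V) := Real.log_natCast_nonneg _
  have hXQ : X ≤ 160 * Real.log (Fintype.card V) * Q :=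
    calc X ≤ 40 * ((Nat.log 2 (Fintype.card V) + 1 : ℕ) : ℝ) * P := hA
      _ ≤ 40 * (4 * Real.log (Fintype.card V)) * Q := by gcongr
      _ = _ := by ring
  have hQ : 0 < Q := by
    by_contra! h
    nlinarith [mul_nonneg hlog (neg_nonneg.2 h)]
  obtain ⟨S, hsS, htS, hdS, hS⟩ := exists_cut_mul_le hcap hdem hcs hds hgs hgt hQ
  refine ⟨S, ⟨s, hsS⟩, fun h => htS (h ▸ Finset.mem_univ t), Or.inl ⟨hsS, htS⟩, hdS, ?_⟩
  have hY : ∑ u, ∑ v, cap u v * |g u - g v| ≤ 2 * Y := by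
    simp only [Y, Finset.mul_sum]
    refine Finset.sum_le_sum fun u _ => Finset.sum_le_sum fun v _ => ?_
    rw [mul_left_comm]
    exact mul_le_mul_of_nonneg_left (hglip u v) (hcap u v)
  set K := (∑ u ∈ S, ∑ v ∈ Sᶜ, cap u v) / (∑ u ∈ S, ∑ v ∈ Sᶜ, dem u v)
  have hK : 0 ≤ K :=
    div_nonneg (Finset.sum_nonneg fun u _ => Finset.sum_nonneg fun v _ => hcap u v) hdS.le
  rw [mul_div_assoc', le_div_iff₀ hpos]
  calc K * X ≤ K * (160 * Real.log (Fintype.card V) * Q) := mul_le_mul_of_nonneg_left hXQ hK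
    _ = 160 * Real.log (Fintype.card V) * (K * Q) := by ring
    _ ≤ 160 * Real.log (Fintype.card V) * (2 * Y) :=
        mul_le_mul_of_nonneg_left (hS.trans hY) (by positivity)
    _ = 320 * Real.log (Fintype.card V) * Y := by ring
end

section
/- Let V be a finite set with distinguished distinct vertices s, t ∈ V, cap : V × V → ℝ≥0 symmetric vanishing on the diagonal, and μ a probability distribution on V. Let (S, V∖S) be an st-separating cut with α := Σ_{(u,v)∈V×V, u and v separated by S} μ(u)·μ(v) > 0. Define x : V → ℝ by x_u = 0 for u ∈ S and x_u = α^{−1/2} for u ∈ V∖S. Then: (i) |x_u − x_v|² ≤ |x_u − x_w|² + |x_w − x_v|² for all u, v, w ∈ V; (ii) |x_s − x_t|² = |x_s − x_v|² + |x_v − x_t|² for all v ∈ V; (iii) Σ_{u,v∈V} μ(u)μ(v)·|x_u − x_v|² = 1; and (iv) Σ_{u,v∈V} cap(u,v)·|x_u − x_v|² equals the sparsity sp(S) with respect to demands dem(u,v) = μ(u)μ(v). In particular, the semidefinite programming relaxation is a relaxation of st-ProductSparsestCut. -/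
/-- For a symmetric weight, summing over all ordered pairs separated by `S` counts the weight
across the cut `(S, Sᶜ)` twice. -/
theorem sum_separated_eq_two_mul_cut {V : Type*} [Fintype V] [DecidableEq V]
    (f : V → V → ℝ) (hf : ∀ u v, f u v = f v u) (S : Finset V) :
    (∑ u, ∑ v, if (u ∈ S ↔ v ∈ S) then 0 else f u v) = 2 * ∑ u ∈ S, ∑ v ∈ Sᶜ, f u v := by
  have hmem : ∀ u ∈ S, (∑ v, if (u ∈ S ↔ v ∈ S) then 0 else f u v) = ∑ v ∈ Sᶜ, f u v := by
    intro u hu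
    rw [Finset.sum_ite, Finset.sum_const_zero, zero_add]
    exact Finset.sum_congr (by ext v; simp [hu]) fun _ _ => rfl
  have hcompl : ∀ u ∈ Sᶜ, (∑ v, if (u ∈ S ↔ v ∈ S) then 0 else f u v) = ∑ v ∈ S, f v u := by
    intro u hu
    rw [Finset.mem_compl] at hu
    rw [Finset.sum_ite, Finset.sum_const_zero, zero_add]
    exact Finset.sum_congr (by ext v; simp [hu]) fun v _ => hf u v
  rw [← Finset.sum_add_sum_compl S, Finset.sum_congr rfl hmem, Finset.sum_congr rfl hcompl,
    Finset.sum_comm (s := Sᶜ), two_mul]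

/-- Lemma 4.2: the SDP (P2) is a relaxation of `st`-ProductSparsestCut.
Given an `st`-separating cut `S` of positive product demand, the one-dimensional
vector solution `x_u = 0` for `u ∈ S`, `x_u = α^{-1/2}` for `u ∉ S` satisfies
all constraints of the SDP and its objective value equals the sparsity. -/
theorem stmt7 {V : Type*} [Fintype V] [DecidableEq V] (s t : V) (hst : s ≠ t)
    (cap : V → V → ℝ)
    (hcap0 : ∀ u v, 0 ≤ cap u v) (hcapsym : ∀ u v, cap u v = cap v u)
    (hcapdiag : ∀ v, cap v v = 0)
    (μ : V → ℝ) (hμ0 : ∀ v, 0 ≤ μ v) (hμ1 : ∑ v, μ v = 1)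
    (S : Finset V) (hS1 : S.Nonempty) (hS2 : S ≠ Finset.univ)
    (hSsep : (s ∈ S ∧ t ∉ S) ∨ (s ∉ S ∧ t ∈ S))
    (α : ℝ)
    (hα : α = ∑ u, ∑ v, if (u ∈ S ↔ v ∈ S) then 0 else μ u * μ v)
    (hαpos : 0 < α)
    (x : V → ℝ) (hx : ∀ u, x u = if u ∈ S then 0 else (Real.sqrt α)⁻¹) :
    (∀ u v w, |x u - x v| ^ 2 ≤ |x u - x w| ^ 2 + |x w - x v| ^ 2) ∧
    (∀ v, |x s - x t| ^ 2 = |x s - x v| ^ 2 + |x v - x t| ^ 2) ∧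
    (∑ u, ∑ v, μ u * μ v * |x u - x v| ^ 2 = 1) ∧
    (∑ u, ∑ v, cap u v * |x u - x v| ^ 2 =
      (∑ u ∈ S, ∑ v ∈ Sᶜ, cap u v) / (∑ u ∈ S, ∑ v ∈ Sᶜ, μ u * μ v)) := by
  have hd : ∀ u v, |x u - x v| ^ 2 = if (u ∈ S ↔ v ∈ S) then 0 else α⁻¹ := by
    intro u v
    rw [sq_abs, hx, hx]
    by_cases hu : u ∈ S <;> by_cases hv : v ∈ S <;> simp [hu, hv, hαpos.le]
  have hsum : ∀ f : V → V → ℝ, ∑ u, ∑ v, f u v * |x u - x v| ^ 2 =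
      (∑ u, ∑ v, if (u ∈ S ↔ v ∈ S) then 0 else f u v) * α⁻¹ := by
    intro f
    simp only [Finset.sum_mul, hd, mul_ite, ite_mul, mul_zero, zero_mul]
  refine ⟨fun u v w => ?_, fun v => ?_, ?_, ?_⟩
  · simp only [hd]
    by_cases hu : u ∈ S <;> by_cases hv : v ∈ S <;> by_cases hw : w ∈ S <;>
      simp [hu, hv, hw, hαpos.le]
  · simp only [hd]
    rcases hSsep with ⟨hs, ht⟩ | ⟨hs, ht⟩ <;> by_cases hv : v ∈ S <;> simp [hs, ht, hv]
  · rw [hsum fun u v => μ u * μ v, ← hα, mul_inv_cancel₀ hαpos.ne']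
  · rw [sum_separated_eq_two_mul_cut (fun u v => μ u * μ v) (fun _ _ => mul_comm _ _)] at hα
    rw [hsum, sum_separated_eq_two_mul_cut cap hcapsym, hα, ← div_eq_mul_inv,
      mul_div_mul_left _ _ two_ne_zero]
end

section
/- Let d be a semi-metric on a finite set V and let μ be a probability distribution on V. Then at least one of the following holds: (I) there exists o ∈ V such that the ball B = {v ∈ V : d(v,o) ≤ 1/4} satisfies μ(B) ≥ 1/2; or (II) Σ_{(u,v)∈V×V : d(u,v) > 1/4} μ(u)·μ(v) ≥ 1/2. -/
/-- Lemma 4.3 (`lmm_cases`, Trevisan's dense-ball dichotomy): for any semi-metric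
`d` and probability distribution `μ` on a finite set, either some ball of radius
`1/4` has `μ`-measure at least `1/2`, or the `μ×μ`-measure of pairs at distance
greater than `1/4` is at least `1/2`. -/
theorem stmt8 {V : Type*} [Fintype V] [DecidableEq V]
    (d : V → V → ℝ) (hnn : ∀ u v, 0 ≤ d u v)
    (hsym : ∀ u v, d u v = d v u) (hdiag : ∀ v, d v v = 0)
    (htri : ∀ u v w, d u v ≤ d u w + d w v)
    (μ : V → ℝ) (hμ0 : ∀ v, 0 ≤ μ v) (hμ1 : ∑ v, μ v = 1) :
    (∃ o : V, (1 : ℝ) / 2 ≤ ∑ v ∈ Finset.univ.filter (fun v => d v o ≤ 1 / 4), μ v) ∨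
    ((1 : ℝ) / 2 ≤ ∑ u, ∑ v, if 1 / 4 < d u v then μ u * μ v else 0) := by
  by_cases hball : ∃ o : V,
      (1 : ℝ) / 2 ≤ ∑ v ∈ Finset.univ.filter (fun v => d v o ≤ 1 / 4), μ v
  · exact Or.inl hball
  · right
    push Not at hball
    have inner_ge (u : V) :
        μ u * (1 / 2) ≤ ∑ v, if 1 / 4 < d u v then μ u * μ v else 0 := by
      have hsplit := Finset.sum_filter_add_sum_filter_not Finset.univ
        (fun v => d v u ≤ 1 / 4) μ
      have hfar : ∑ v ∈ Finset.univ.filter (fun v => ¬ d v u ≤ 1 / 4), μ v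
          = ∑ v, if 1 / 4 < d u v then μ v else 0 := by
        simp only [Finset.sum_filter, not_le, hsym u]
      have hmul : (∑ v, if 1 / 4 < d u v then μ u * μ v else 0)
          = μ u * ∑ v, if 1 / 4 < d u v then μ v else 0 := by
        simp only [Finset.mul_sum, mul_ite, mul_zero]
      rw [hmul]
      exact mul_le_mul_of_nonneg_left (by linarith [hball u]) (hμ0 u)
    calc (1 : ℝ) / 2 = ∑ u, μ u * (1 / 2) := by rw [← Finset.sum_mul, hμ1, one_mul]
      _ ≤ _ := Finset.sum_le_sum fun u _ => inner_ge u
end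

section
/- Let V be a finite set with distinguished distinct vertices s, t ∈ V, cap : V × V → ℝ≥0 symmetric vanishing on the diagonal, and μ a probability distribution on V. Let d be an st-separating semi-metric on V with Σ_{u,v∈V} μ(u)μ(v)·d(u,v) = 1, and suppose there exists o ∈ V such that the ball B = {v ∈ V : d(v,o) ≤ 1/4} satisfies μ(B) ≥ 1/2. Then there exists an st-separating cut (S, V∖S) with Σ_{u∈S,v∈V∖S} μ(u)μ(v) > 0 whose sparsity with respect to demands dem(u,v) = μ(u)μ(v) is at most 32·Σ_{u,v∈V} cap(u,v)·d(u,v). -/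
open Finset in
/-- Gaps between consecutive elements of a finite set of reals: `c x` is the distance from `x`
to its successor, so that distances in `T` are sums of gaps. -/
theorem exists_gaps (T : Finset ℝ) :
    ∃ c : ℝ → ℝ, (∀ x, 0 ≤ c x) ∧ ∀ a ∈ T, ∀ b ∈ T, a ≤ b →
      b - a = ∑ x ∈ T, if a ≤ x ∧ x < b then c x else 0 := by
  induction T using Finset.induction_on_max with
  | empty => exact ⟨0, by simp, by simp⟩
  | insert M T hM ih =>
    obtain ⟨c, hc, h⟩ := ih
    have hMT : M ∉ T := fun hmem => lt_irrefl _ (hM M hmem)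
    rcases T.eq_empty_or_nonempty with rfl | hT
    · refine ⟨0, by simp, ?_⟩
      simp
    set m := T.max' hT
    have hmT : m ∈ T := T.max'_mem hT
    have hle : ∀ x ∈ T, x ≤ m := fun x hx => T.le_max' x hx
    refine ⟨Function.update c m (M - m), ?_, ?_⟩
    · intro x
      by_cases hx : x = m
      · subst hx
        simpa using (hM _ hmT).le
      · simpa [hx] using hc x
    have old : ∀ a ∈ T, ∀ b ∈ T, a ≤ b →
        b - a = ∑ x ∈ T, if a ≤ x ∧ x < b then Function.update c m (M - m) x else 0 := by
      intro a ha b hb hab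
      rw [h a ha b hb hab]
      refine sum_congr rfl fun x hx => ?_
      by_cases hxm : x = m
      · have : ¬ x < b := by rw [hxm]; exact not_lt.2 (hle b hb)
        simp [this]
      · simp [hxm]
    intro a ha b hb hab
    rw [sum_insert hMT]
    have hbM : b ≤ M := by
      rcases mem_insert.1 hb with rfl | hb
      · exact le_rfl
      · exact (hM b hb).le
    rw [if_neg (fun hh => absurd hh.2 (not_lt.2 hbM)), zero_add]
    rcases mem_insert.1 ha with rfl | haT
    · have : b = a := le_antisymm hbM hab
      subst this
      rw [sum_eq_zero]
      · simp
      · intro x _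
        rw [if_neg]
        intro hh
        linarith [hh.1, hh.2]
    rcases mem_insert.1 hb with rfl | hb
    · have key : ∀ x ∈ T, (if a ≤ x ∧ x < b then Function.update c m (b - m) x else 0) =
          (if a ≤ x ∧ x < m then Function.update c m (b - m) x else 0) +
            if x = m then b - m else 0 := by
        intro x hx
        by_cases hxm : x = m
        · subst hxm
          simp [hle a haT, hM _ hx]
        · have : x < m := lt_of_le_of_ne (hle x hx) hxm
          simp [hxm, this, hM x hx]
      rw [sum_congr rfl key, sum_add_distrib, ← old a haT m hmT (hle a haT), sum_ite_eq' T m,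
        if_pos hmT]
      ring
    · exact old a haT b hb hab

open Finset in
/-- The line metric induced by `f` is a nonnegative combination of its threshold cuts. -/
theorem exists_threshold_cut_decomposition {V : Type*} [Fintype V] [DecidableEq V] (f : V → ℝ) :
    ∃ (T : Finset ℝ) (c : ℝ → ℝ), (∀ x, 0 ≤ c x) ∧
      ∀ w : V → V → ℝ, (∀ u v, w u v = w v u) →
        ∑ u, ∑ v, w u v * |f u - f v| =
          2 * ∑ x ∈ T, c x *
            ∑ u ∈ univ.filter (fun v => f v ≤ x), ∑ v ∈ (univ.filter (fun v => f v ≤ x))ᶜ,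
              w u v := by
  obtain ⟨c, hc, h⟩ := exists_gaps (univ.image f)
  refine ⟨univ.image f, c, hc, fun w hw => ?_⟩
  have habs : ∀ u v, |f u - f v| =
      (∑ x ∈ univ.image f, if f u ≤ x ∧ x < f v then c x else 0) +
        ∑ x ∈ univ.image f, if f v ≤ x ∧ x < f u then c x else 0 := by
    have zero : ∀ u v, f u ≤ f v →
        (∑ x ∈ univ.image f, if f v ≤ x ∧ x < f u then c x else 0) = 0 := by
      intro u v huv
      refine sum_eq_zero fun x _ => if_neg fun hh => ?_
      linarith [hh.1, hh.2]
    intro u v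
    rcases le_total (f u) (f v) with huv | huv
    · rw [zero u v huv, ← h _ (by simp) _ (by simp) huv, abs_of_nonpos (by linarith)]
      ring
    · rw [zero v u huv, ← h _ (by simp) _ (by simp) huv, abs_of_nonneg (by linarith)]
      ring
  have hcut : ∀ x, ∑ u ∈ univ.filter (fun v => f v ≤ x),
      ∑ v ∈ (univ.filter (fun v => f v ≤ x))ᶜ, w u v =
        ∑ u, ∑ v, if f u ≤ x ∧ x < f v then w u v else 0 := by
    intro x
    rw [sum_filter]
    refine sum_congr rfl fun u _ => ?_
    by_cases hu : f u ≤ x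
    · simp [hu, ← sum_filter, compl_filter]
    · simp [hu]
  have hhalf : ∑ u, ∑ v, w u v * (∑ x ∈ univ.image f, if f u ≤ x ∧ x < f v then c x else 0) =
      ∑ x ∈ univ.image f, c x * ∑ u ∈ univ.filter (fun v => f v ≤ x),
        ∑ v ∈ (univ.filter (fun v => f v ≤ x))ᶜ, w u v := by
    simp_rw [hcut, mul_sum]
    rw [sum_comm (s := univ.image f)]
    refine sum_congr rfl fun u _ => ?_
    rw [sum_comm (s := univ.image f)]
    refine sum_congr rfl fun v _ => sum_congr rfl fun x _ => ?_
    split_ifs <;> ring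
  have hhalf' : ∑ u, ∑ v, w u v * (∑ x ∈ univ.image f, if f v ≤ x ∧ x < f u then c x else 0) =
      ∑ u, ∑ v, w u v * (∑ x ∈ univ.image f, if f u ≤ x ∧ x < f v then c x else 0) := by
    rw [sum_comm]
    exact sum_congr rfl fun u _ => sum_congr rfl fun v _ => by rw [hw]
  simp_rw [habs, mul_add, sum_add_distrib]
  rw [hhalf', hhalf]
  ring

open Finset in
/-- Some threshold cut of `f` has sparsity at most `K` as soon as `f` does on average. -/
theorem exists_sparse_threshold_cut {V : Type*} [Fintype V] [DecidableEq V] (f : V → ℝ)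
    (cap dem : V → V → ℝ) (hcapsym : ∀ u v, cap u v = cap v u) (hcap0 : ∀ u v, 0 ≤ cap u v)
    (hdemsym : ∀ u v, dem u v = dem v u) (hdem0 : ∀ u v, 0 ≤ dem u v) (K : ℝ)
    (hpos : 0 < ∑ u, ∑ v, dem u v * |f u - f v|)
    (hK : ∑ u, ∑ v, cap u v * |f u - f v| ≤ K * ∑ u, ∑ v, dem u v * |f u - f v|) :
    ∃ x : ℝ,
      (0 < ∑ u ∈ univ.filter (fun v => f v ≤ x), ∑ v ∈ (univ.filter (fun v => f v ≤ x))ᶜ,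
        dem u v) ∧
      (∑ u ∈ univ.filter (fun v => f v ≤ x), ∑ v ∈ (univ.filter (fun v => f v ≤ x))ᶜ, cap u v) /
        (∑ u ∈ univ.filter (fun v => f v ≤ x), ∑ v ∈ (univ.filter (fun v => f v ≤ x))ᶜ,
          dem u v) ≤ K := by
  obtain ⟨T, c, hc, h⟩ := exists_threshold_cut_decomposition f
  rw [h cap hcapsym, h dem hdemsym] at hK
  rw [h dem hdemsym] at hpos
  set C : ℝ → ℝ := fun x =>
    ∑ u ∈ univ.filter (fun v => f v ≤ x), ∑ v ∈ (univ.filter (fun v => f v ≤ x))ᶜ, cap u v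
  set D : ℝ → ℝ := fun x =>
    ∑ u ∈ univ.filter (fun v => f v ≤ x), ∑ v ∈ (univ.filter (fun v => f v ≤ x))ᶜ, dem u v
  change 0 < 2 * ∑ x ∈ T, c x * D x at hpos
  change 2 * ∑ x ∈ T, c x * C x ≤ K * (2 * ∑ x ∈ T, c x * D x) at hK
  change ∃ x, 0 < D x ∧ C x / D x ≤ K
  have hC0 : ∀ x, 0 ≤ C x := fun x => sum_nonneg fun u _ => sum_nonneg fun v _ => hcap0 u v
  have hD0 : ∀ x, 0 ≤ D x := fun x => sum_nonneg fun u _ => sum_nonneg fun v _ => hdem0 u v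
  by_contra! hcon
  have hlt : ∀ x, 0 < D x → K * D x < C x := fun x hx => (lt_div_iff₀ hx).1 (hcon x hx)
  obtain ⟨y, hyT, hy⟩ : ∃ y ∈ T, 0 < c y * D y := by
    by_contra! hle
    linarith [sum_nonpos hle]
  have hDy : 0 < D y := pos_of_mul_pos_right hy (hc y)
  have hcy : 0 < c y := pos_of_mul_pos_left hy (hD0 y)
  have : ∑ x ∈ T, K * (c x * D x) < ∑ x ∈ T, c x * C x := by
    refine sum_lt_sum (fun x _ => ?_) ⟨y, hyT, ?_⟩
    · rcases (hD0 x).eq_or_lt with hx | hx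
      · rw [← hx]
        simpa using mul_nonneg (hc x) (hC0 x)
      · nlinarith [mul_le_mul_of_nonneg_left (hlt x hx).le (hc x)]
    · nlinarith [mul_lt_mul_of_pos_left (hlt y hDy) hcy]
  rw [← mul_sum] at this
  linarith

open Finset in
/-- The truncated distance to a dense ball has average spread at least `1 / 4`. -/
theorem dense_ball_spread {V : Type*} [Fintype V]
    (μ : V → ℝ) (hμ0 : ∀ v, 0 ≤ μ v) (hμ1 : ∑ v, μ v = 1) (d : V → V → ℝ)
    (hsym : ∀ u v, d u v = d v u) (htri : ∀ u v w, d u v ≤ d u w + d w v)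
    (hnorm : ∑ u, ∑ v, μ u * μ v * d u v = 1) (o : V)
    (hball : (1 : ℝ) / 2 ≤ ∑ v ∈ univ.filter (fun v => d v o ≤ 1 / 4), μ v) :
    1 / 4 ≤ ∑ u, ∑ v, μ u * μ v * |max (d u o - 1 / 4) 0 - max (d v o - 1 / 4) 0| := by
  set r : V → ℝ := fun v => max (d v o - 1 / 4) 0
  have hr0 : ∀ v, 0 ≤ r v := fun v => le_max_right _ _
  have hmean : 1 ≤ 2 * ∑ v, μ v * d v o := by
    have hsplit : ∑ u, ∑ v, (μ u * d u o * μ v + μ u * (μ v * d v o)) =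
        2 * ∑ v, μ v * d v o := by
      simp_rw [sum_add_distrib, ← mul_sum, ← sum_mul, hμ1]
      ring
    rw [← hnorm, ← hsplit]
    refine sum_le_sum fun u _ => sum_le_sum fun v _ => ?_
    have := mul_le_mul_of_nonneg_left (htri u v o) (mul_nonneg (hμ0 u) (hμ0 v))
    rw [hsym o v] at this
    linarith
  have hrmean : 1 / 4 ≤ ∑ v, μ v * r v := by
    have hle : ∑ v, μ v * (d v o - 1 / 4) ≤ ∑ v, μ v * r v :=
      sum_le_sum fun v _ => mul_le_mul_of_nonneg_left (le_max_left _ _) (hμ0 v)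
    simp_rw [mul_sub, sum_sub_distrib, ← sum_mul, hμ1] at hle
    linarith
  set b : V → ℝ := fun v => if d v o ≤ 1 / 4 then μ v else 0 with hb
  have hbsum : (1 : ℝ) / 2 ≤ ∑ v, b v := by rwa [hb, ← sum_filter]
  have hpoint : ∀ u v, b u * (μ v * r v) + μ u * r u * b v ≤ μ u * μ v * |r u - r v| := by
    intro u v
    have hball0 : ∀ w, d w o ≤ 1 / 4 → r w = 0 := fun w hw => max_eq_right (by linarith)
    have hμμ := mul_nonneg (hμ0 u) (hμ0 v)
    by_cases hu : d u o ≤ 1 / 4 <;> by_cases hv : d v o ≤ 1 / 4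
    · simp [hball0 u hu, hball0 v hv]
    · simp only [hb, hu, hv, hball0 u hu, if_true, if_false, zero_sub, abs_neg,
        abs_of_nonneg (hr0 v)]
      linarith
    · simp only [hb, hu, hv, hball0 v hv, if_true, if_false, sub_zero, abs_of_nonneg (hr0 u)]
      linarith
    · simp only [hb, hu, hv, if_false, zero_mul, mul_zero, add_zero]
      exact mul_nonneg hμμ (abs_nonneg _)
  calc (1 : ℝ) / 4 ≤ (∑ v, b v) * (∑ v, μ v * r v) + (∑ v, μ v * r v) * ∑ v, b v := by
        nlinarith
    _ = ∑ u, ∑ v, (b u * (μ v * r v) + μ u * r u * b v) := by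
        simp_rw [sum_add_distrib, sum_mul_sum]
    _ ≤ _ := sum_le_sum fun u _ => sum_le_sum fun v _ => hpoint u v

/-- Lemma 4.4 (`lmm_denseball`, the dense-ball case): if an `st`-separating
semi-metric `d` with `Σ μμ·d = 1` has a ball `B = {v : d(v,o) ≤ 1/4}` with
`μ(B) ≥ 1/2`, then there is an `st`-separating cut of positive product demand
whose sparsity is at most `32·Σ cap·d`. -/
theorem stmt9 {V : Type*} [Fintype V] [DecidableEq V] (s t : V) (hst : s ≠ t)
    (cap : V → V → ℝ)
    (hcap0 : ∀ u v, 0 ≤ cap u v) (hcapsym : ∀ u v, cap u v = cap v u)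
    (hcapdiag : ∀ v, cap v v = 0)
    (μ : V → ℝ) (hμ0 : ∀ v, 0 ≤ μ v) (hμ1 : ∑ v, μ v = 1)
    (d : V → V → ℝ) (hnn : ∀ u v, 0 ≤ d u v)
    (hsym : ∀ u v, d u v = d v u) (hdiag : ∀ v, d v v = 0)
    (htri : ∀ u v w, d u v ≤ d u w + d w v)
    (hsep : ∀ v, d s t = d s v + d v t)
    (hnorm : ∑ u, ∑ v, μ u * μ v * d u v = 1)
    (o : V)
    (hball : (1 : ℝ) / 2 ≤ ∑ v ∈ Finset.univ.filter (fun v => d v o ≤ 1 / 4), μ v) :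
    ∃ S : Finset V, S.Nonempty ∧ S ≠ Finset.univ ∧
      ((s ∈ S ∧ t ∉ S) ∨ (s ∉ S ∧ t ∈ S)) ∧
      (0 < ∑ u ∈ S, ∑ v ∈ Sᶜ, μ u * μ v) ∧
      (∑ u ∈ S, ∑ v ∈ Sᶜ, cap u v) / (∑ u ∈ S, ∑ v ∈ Sᶜ, μ u * μ v) ≤
        32 * ∑ u, ∑ v, cap u v * d u v := by
  set r : V → ℝ := fun v => max (d v o - 1 / 4) 0
  have hspread := dense_ball_spread μ hμ0 hμ1 d hsym htri hnorm o hball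
  have hrlip : ∀ u v, |r u - r v| ≤ d u v := by
    intro u v
    refine (abs_max_sub_max_le_abs _ _ _).trans (abs_le.2 ⟨?_, ?_⟩)
    · linarith [htri v o u, hsym u v]
    · linarith [htri u o v]
  have hslip : ∀ u v, |d s u - d s v| ≤ d u v := fun u v =>
    abs_le.2 ⟨by linarith [htri s v u], by linarith [htri s u v, hsym u v]⟩
  -- Adding a 1-Lipschitz function to `d s ·` keeps `s` a minimiser and `t` a maximiser.
  have main : ∀ ρ : V → ℝ, (∀ u v, |ρ u - ρ v| ≤ d u v) →
      1 / 4 ≤ ∑ u, ∑ v, μ u * μ v * |(d s u + ρ u) - (d s v + ρ v)| →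
      ∃ S : Finset V, S.Nonempty ∧ S ≠ Finset.univ ∧
        ((s ∈ S ∧ t ∉ S) ∨ (s ∉ S ∧ t ∈ S)) ∧
        (0 < ∑ u ∈ S, ∑ v ∈ Sᶜ, μ u * μ v) ∧
        (∑ u ∈ S, ∑ v ∈ Sᶜ, cap u v) / (∑ u ∈ S, ∑ v ∈ Sᶜ, μ u * μ v) ≤
          32 * ∑ u, ∑ v, cap u v * d u v := by
    intro ρ hρ hquarter
    have hcapd : 0 ≤ ∑ u, ∑ v, cap u v * d u v :=
      Finset.sum_nonneg fun u _ => Finset.sum_nonneg fun v _ => mul_nonneg (hcap0 u v) (hnn u v)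
    have hcaplip : ∑ u, ∑ v, cap u v * |(d s u + ρ u) - (d s v + ρ v)| ≤
        2 * ∑ u, ∑ v, cap u v * d u v := by
      simp_rw [Finset.mul_sum]
      refine Finset.sum_le_sum fun u _ => Finset.sum_le_sum fun v _ => ?_
      have hlip : |(d s u + ρ u) - (d s v + ρ v)| ≤ 2 * d u v := by
        rw [add_sub_add_comm]
        linarith [abs_add_le (d s u - d s v) (ρ u - ρ v), hρ u v, hslip u v]
      linarith [mul_le_mul_of_nonneg_left hlip (hcap0 u v)]
    obtain ⟨x, hx, hxle⟩ := exists_sparse_threshold_cut (fun v => d s v + ρ v) cap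
      (fun u v => μ u * μ v) hcapsym hcap0 (fun u v => mul_comm _ _)
      (fun u v => mul_nonneg (hμ0 u) (hμ0 v)) (32 * ∑ u, ∑ v, cap u v * d u v)
      (by linarith) (by nlinarith)
    have hmin : ∀ v, d s s + ρ s ≤ d s v + ρ v := fun v => by
      linarith [(abs_le.1 (hρ s v)).2, hdiag s]
    have hmax : ∀ v, d s v + ρ v ≤ d s t + ρ t := fun v => by
      linarith [(abs_le.1 (hρ v t)).2, hsep v]
    obtain ⟨u, hu, hu'⟩ := Finset.exists_ne_zero_of_sum_ne_zero hx.ne'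
    obtain ⟨v, hv, -⟩ := Finset.exists_ne_zero_of_sum_ne_zero hu'
    have hu : d s u + ρ u ≤ x := by simpa using hu
    have hv : x < d s v + ρ v := by simpa using hv
    have hs : s ∈ Finset.univ.filter (fun v => d s v + ρ v ≤ x) := by
      simpa using (hmin u).trans hu
    have ht : t ∉ Finset.univ.filter (fun v => d s v + ρ v ≤ x) := by
      simpa using hv.trans_le (hmax v)
    exact ⟨_, ⟨s, hs⟩, fun h => ht (by rw [h]; exact Finset.mem_univ t), Or.inl ⟨hs, ht⟩, hx, hxle⟩
  have hsum : 2 * ∑ u, ∑ v, μ u * μ v * |r u - r v| ≤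
      (∑ u, ∑ v, μ u * μ v * |(d s u + r u) - (d s v + r v)|) +
        ∑ u, ∑ v, μ u * μ v * |(d s u + -r u) - (d s v + -r v)| := by
    simp_rw [← Finset.sum_add_distrib, Finset.mul_sum]
    refine Finset.sum_le_sum fun u _ => Finset.sum_le_sum fun v _ => ?_
    have habs : 2 * |r u - r v| ≤
        |(d s u + r u) - (d s v + r v)| + |(d s u + -r u) - (d s v + -r v)| := by
      have := abs_sub ((d s u + r u) - (d s v + r v)) ((d s u + -r u) - (d s v + -r v))
      rw [show ((d s u + r u) - (d s v + r v)) - ((d s u + -r u) - (d s v + -r v)) =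
        2 * (r u - r v) by ring, abs_mul, abs_two] at this
      exact this
    nlinarith [mul_le_mul_of_nonneg_left habs (mul_nonneg (hμ0 u) (hμ0 v))]
  rcases le_total (1 / 4)
    (∑ u, ∑ v, μ u * μ v * |(d s u + r u) - (d s v + r v)|) with h | h
  · exact main r hrlip h
  · refine main (fun v => -r v) (fun u v => ?_) (by linarith)
    rw [neg_sub_neg, abs_sub_comm]
    exact hrlip u v
end

section
/- Let k ≥ 0, let y_u, y_v ∈ ℝ and z_u, z_v ∈ ℝ^k, and set x_u = (y_u, z_u), x_v = (y_v, z_v) ∈ ℝ^{1+k}. Let g be a random vector in ℝ^k whose coordinates are independent standard Gaussians, and define f_g(w) = y_w + (1/6)·⟨z_w, g⟩ for w ∈ {u,v}. Then (1/16)·‖x_u − x_v‖₂ ≤ E_g |f_g(u) − f_g(v)| ≤ √2·‖x_u − x_v‖₂. -/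
open MeasureTheory ProbabilityTheory

/-- A linear functional of a standard Gaussian vector has the law of its coefficient norm times a
standard Gaussian. -/
lemma map_sum_mul_pi_gaussianReal {ι : Type*} [Fintype ι] (b : ι → ℝ) :
    (Measure.pi fun _ : ι => gaussianReal 0 1).map (fun g => ∑ i, b i * g i) =
      (gaussianReal 0 1).map (fun x => Real.sqrt (∑ i, b i ^ 2) * x) := by
  have hσ : Real.sqrt (∑ i, b i ^ 2) ^ 2 = ∑ i, b i ^ 2 :=
    Real.sq_sqrt (Finset.sum_nonneg fun i _ => sq_nonneg (b i))
  have : IsProbabilityMeasure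
      ((Measure.pi fun _ : ι => gaussianReal 0 1).map (fun g => ∑ i, b i * g i)) :=
    Measure.isProbabilityMeasure_map (Measurable.aemeasurable (by fun_prop))
  rw [gaussianReal_map_const_mul]
  refine Measure.ext_of_charFun ?_
  ext t
  rw [charFun_gaussianReal, charFun_apply_real,
    integral_map (Measurable.aemeasurable (by fun_prop))
      (Measurable.aestronglyMeasurable (by fun_prop))]
  have hprod : ∀ g : ι → ℝ,
      Complex.exp (t * ((∑ i, b i * g i : ℝ) : ℂ) * Complex.I) =
        ∏ i, Complex.exp (((t * b i : ℝ) : ℂ) * (g i : ℂ) * Complex.I) := by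
    intro g
    rw [← Complex.exp_sum]
    push_cast
    rw [Finset.mul_sum, Finset.sum_mul]
    congr 1
    exact Finset.sum_congr rfl fun i _ => by ring
  simp_rw [hprod]
  rw [integral_fintype_prod_eq_prod (𝕜 := ℂ)
    (fun i (x : ℝ) => Complex.exp (((t * b i : ℝ) : ℂ) * (x : ℂ) * Complex.I))]
  simp_rw [← charFun_apply_real, charFun_gaussianReal]
  rw [← Complex.exp_sum]
  congr 1
  simp only [NNReal.coe_mul, NNReal.coe_mk, hσ]
  push_cast
  simp only [mul_zero, zero_mul, zero_sub, one_mul, mul_one, Finset.sum_neg_distrib]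
  rw [Finset.sum_mul, Finset.sum_div]
  congr 1
  exact Finset.sum_congr rfl fun i _ => by ring

lemma one_sub_cos_le_abs (x : ℝ) : 1 - Real.cos x ≤ |x| := by
  rcases le_total |x| 2 with h | h
  · nlinarith [Real.one_sub_sq_div_two_le_cos (x := x), sq_abs x, abs_nonneg x]
  · linarith [Real.neg_one_le_cos x]

lemma integral_cos_gaussianReal :
    ∫ x, Real.cos x ∂(gaussianReal 0 1) = Real.exp (-1 / 2) := by
  have h := charFun_gaussianReal (μ := 0) (v := 1) 1
  rw [charFun_apply_real] at h
  have hre := congrArg Complex.re h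
  have hint : Integrable (fun x : ℝ => Complex.exp (((1 : ℝ) : ℂ) * (x : ℂ) * Complex.I))
      (gaussianReal 0 1) := by
    refine Integrable.of_bound (Measurable.aestronglyMeasurable (by fun_prop)) 1
      (Filter.Eventually.of_forall fun x => ?_)
    rw [← Complex.ofReal_mul, Complex.norm_exp_ofReal_mul_I]
  rw [← RCLike.re_eq_complex_re, ← integral_re hint] at hre
  have hl : ∀ x : ℝ, RCLike.re (Complex.exp (((1 : ℝ) : ℂ) * (x : ℂ) * Complex.I)) =
      Real.cos x := fun x => by
    simp [Complex.exp_ofReal_mul_I_re]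
  simp_rw [hl] at hre
  rw [hre, RCLike.re_eq_complex_re, ← Complex.exp_ofReal_re]
  congr 2
  push_cast
  ring

lemma integrable_id_stdGaussianReal : Integrable (fun x : ℝ => x) (gaussianReal 0 1) :=
  (memLp_id_gaussianReal 1).integrable le_rfl

lemma le_integral_abs_gaussianReal : 39 / 100 ≤ ∫ x, |x| ∂(gaussianReal 0 1) := by
  have hcos : Integrable Real.cos (gaussianReal 0 1) :=
    Integrable.of_bound (Measurable.aestronglyMeasurable (by fun_prop)) 1
      (Filter.Eventually.of_forall fun x => Real.abs_cos_le_one x)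
  have h : ∫ x, (1 - Real.cos x) ∂(gaussianReal 0 1) ≤ ∫ x, |x| ∂(gaussianReal 0 1) :=
    integral_mono ((integrable_const 1).sub hcos) integrable_id_stdGaussianReal.abs
      one_sub_cos_le_abs
  rw [integral_sub (integrable_const 1) hcos, integral_cos_gaussianReal] at h
  simp only [integral_const, probReal_univ, smul_eq_mul, mul_one] at h
  have hexp : Real.exp (-1 / 2) ^ 2 * Real.exp 1 = 1 := by
    rw [← Real.exp_nat_mul, ← Real.exp_add]
    norm_num
  have hle : Real.exp (-1 / 2) ≤ 61 / 100 := by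
    by_contra! hlt
    nlinarith [Real.exp_one_gt_d9, Real.exp_pos (-1 / 2)]
  linarith

lemma abs_le_integral_abs_add_mul (a c : ℝ) :
    |a| ≤ ∫ x, |a + c * x| ∂(gaussianReal 0 1) := by
  have h := abs_integral_le_integral_abs (f := fun x => a + c * x) (μ := gaussianReal 0 1)
  rw [integral_add (integrable_const a) (integrable_id_stdGaussianReal.const_mul c),
    integral_const_mul, integral_id_gaussianReal] at h
  simpa using h

lemma mul_integral_abs_le_integral_abs_add_mul (a c : ℝ) :
    |c| * ∫ x, |x| ∂(gaussianReal 0 1) ≤ ∫ x, |a + c * x| ∂(gaussianReal 0 1) := by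
  have hint : ∀ c : ℝ, Integrable (fun x => |a + c * x|) (gaussianReal 0 1) := fun c =>
    ((integrable_const a).add (integrable_id_stdGaussianReal.const_mul c)).abs
  have hneg : ∫ x, |a + -c * x| ∂(gaussianReal 0 1) = ∫ x, |a + c * x| ∂(gaussianReal 0 1) := by
    have hmap : (gaussianReal 0 1).map (fun x => -x) = gaussianReal 0 1 := by
      simpa using gaussianReal_map_neg (μ := 0) (v := 1)
    conv_rhs => rw [← hmap]
    rw [integral_map (by fun_prop) (Measurable.aestronglyMeasurable (by fun_prop))]
    simp
  have h : ∫ x, 2 * (|c| * |x|) ∂(gaussianReal 0 1) ≤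
      ∫ x, (|a + c * x| + |a + -c * x|) ∂(gaussianReal 0 1) := by
    refine integral_mono ((integrable_id_stdGaussianReal.abs.const_mul _).const_mul _)
      ((hint c).add (hint (-c))) fun x => ?_
    have hx := abs_sub (a + c * x) (a + -c * x)
    rw [show a + c * x - (a + -c * x) = 2 * (c * x) by ring, abs_mul, abs_mul, abs_two] at hx
    exact hx
  rw [integral_const_mul, integral_const_mul, integral_add (hint c) (hint (-c)), hneg] at h
  linarith

lemma sq_integral_abs_add_mul_le (a c : ℝ) :
    (∫ x, |a + c * x| ∂(gaussianReal 0 1)) ^ 2 ≤ a ^ 2 + c ^ 2 := by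
  have hlin : MemLp (fun x : ℝ => a + c * x) 2 (gaussianReal 0 1) :=
    (memLp_const a).add ((memLp_id_gaussianReal 2).const_mul c)
  have habs := variance_eq_sub hlin.abs
  have hvar := variance_eq_sub hlin
  have hmean : ∫ x, (a + c * x) ∂(gaussianReal 0 1) = a := by
    rw [integral_add (integrable_const a) (integrable_id_stdGaussianReal.const_mul c),
      integral_const_mul, integral_id_gaussianReal]
    simp
  rw [variance_const_add (by fun_prop), variance_const_mul, variance_fun_id_gaussianReal,
    hmean] at hvar
  simp only [Pi.pow_apply, Pi.abs_apply, sq_abs] at habs hvar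
  have hnonneg := variance_nonneg (|fun x : ℝ => a + c * x|) (gaussianReal 0 1)
  simp only [NNReal.coe_one, mul_one] at hvar
  linarith

/-- Claim 4.7 (`f0_claim`): for `x_w = (y_w, z_w) ∈ ℝ × ℝ^k` and a standard
Gaussian random vector `g ∈ ℝ^k`, the random projection
`f_g(w) = y_w + (1/6)·⟨z_w, g⟩` satisfies
`(1/16)·‖x_u − x_v‖₂ ≤ E_g|f_g(u) − f_g(v)| ≤ √2·‖x_u − x_v‖₂`. -/
theorem stmt13 (k : ℕ) (yu yv : ℝ) (zu zv : Fin k → ℝ) :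
    (1 / 16) * Real.sqrt ((yu - yv) ^ 2 + ∑ i, (zu i - zv i) ^ 2) ≤
      (∫ g : Fin k → ℝ,
        |(yu + (1 / 6) * ∑ i, zu i * g i) - (yv + (1 / 6) * ∑ i, zv i * g i)|
        ∂(Measure.pi fun _ : Fin k => gaussianReal 0 1)) ∧
    (∫ g : Fin k → ℝ,
        |(yu + (1 / 6) * ∑ i, zu i * g i) - (yv + (1 / 6) * ∑ i, zv i * g i)|
        ∂(Measure.pi fun _ : Fin k => gaussianReal 0 1)) ≤
      Real.sqrt 2 * Real.sqrt ((yu - yv) ^ 2 + ∑ i, (zu i - zv i) ^ 2) := by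
  have hS : 0 ≤ ∑ i, (zu i - zv i) ^ 2 := Finset.sum_nonneg fun i _ => sq_nonneg _
  set a := yu - yv with ha
  set σ := Real.sqrt (∑ i, (zu i - zv i) ^ 2) with hσ
  have hσ0 : 0 ≤ σ := Real.sqrt_nonneg _
  have hσsq : ∑ i, (zu i - zv i) ^ 2 = σ ^ 2 := (Real.sq_sqrt hS).symm
  have hlaw : (∫ g : Fin k → ℝ,
        |(yu + (1 / 6) * ∑ i, zu i * g i) - (yv + (1 / 6) * ∑ i, zv i * g i)|
        ∂(Measure.pi fun _ : Fin k => gaussianReal 0 1)) =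
      ∫ x, |a + σ / 6 * x| ∂(gaussianReal 0 1) := by
    calc _ = ∫ g : Fin k → ℝ, |a + 1 / 6 * ∑ i, (zu i - zv i) * g i|
          ∂(Measure.pi fun _ : Fin k => gaussianReal 0 1) := by
          congr 1 with g
          simp only [sub_mul, Finset.sum_sub_distrib, ha]
          congr 1
          ring
      _ = ∫ s, |a + 1 / 6 * s| ∂((Measure.pi fun _ : Fin k => gaussianReal 0 1).map
            (fun g => ∑ i, (zu i - zv i) * g i)) := by
          rw [integral_map (Measurable.aemeasurable (by fun_prop))
            (Measurable.aestronglyMeasurable (by fun_prop))]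
      _ = _ := by
          rw [map_sum_mul_pi_gaussianReal, ← hσ,
            integral_map (by fun_prop) (Measurable.aestronglyMeasurable (by fun_prop))]
          congr 1 with x
          congr 1
          ring
  rw [hlaw, hσsq]
  have hmean := abs_le_integral_abs_add_mul a (σ / 6)
  have hdev := mul_integral_abs_le_integral_abs_add_mul a (σ / 6)
  have hsq := sq_integral_abs_add_mul_le a (σ / 6)
  have hgauss := le_integral_abs_gaussianReal
  rw [abs_of_nonneg (by positivity : 0 ≤ σ / 6)] at hdev
  set J := ∫ x, |a + σ / 6 * x| ∂(gaussianReal 0 1)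
  have hJ : 0 ≤ J := (abs_nonneg a).trans hmean
  constructor
  · have hdev' : 39 / 600 * σ ≤ J := by nlinarith
    have ha2 : a ^ 2 ≤ J ^ 2 := sq_le_sq' (by linarith [neg_abs_le a]) (by linarith [le_abs_self a])
    have hs2 : (39 / 600 * σ) ^ 2 ≤ J ^ 2 := by gcongr
    have : Real.sqrt (a ^ 2 + σ ^ 2) ≤ 16 * J :=
      Real.sqrt_le_iff.2 ⟨by positivity, by nlinarith⟩
    linarith
  · rw [← Real.sqrt_mul (by norm_num)]
    exact Real.le_sqrt_of_sq_le (by nlinarith [sq_nonneg a, sq_nonneg σ])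
end

section
/- Let T > 0 and let F_{α,T} : ℝ → ℝ be the flip map: F_{α,T}(x) = T − α·(x − T) if x > T; F_{α,T}(x) = x if 0 ≤ x ≤ T; F_{α,T}(x) = −α·x if x < 0. Then for all a, b ∈ [−T/3, 4T/3], the average over α chosen uniformly from {1/3, 1} satisfies (1/2)·(|F_{1/3,T}(a) − F_{1/3,T}(b)| + |F_{1,T}(a) − F_{1,T}(b)|) ≥ (1/6)·|a − b|. -/
/-- The flip map `F_{α,T}` of Step 2 of Lemma 4.5. -/
noncomputable def flipMap (α T x : ℝ) : ℝ :=
  if T < x then T - α * (x - T) else if x < 0 then -α * x else x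

/-- Claim 4.12 (`flipping_claim2`): for `a, b ∈ [−T/3, 4T/3]`, the average over
`α ∈ {1/3, 1}` of `|F_{α,T}(a) − F_{α,T}(b)|` is at least `(1/6)·|a − b|`. -/
theorem stmt16 (T : ℝ) (hT : 0 < T) (a b : ℝ)
    (ha : a ∈ Set.Icc (-(T / 3)) (4 * T / 3))
    (hb : b ∈ Set.Icc (-(T / 3)) (4 * T / 3)) :
    (1 / 6) * |a - b| ≤
      (1 / 2) * (|flipMap (1 / 3) T a - flipMap (1 / 3) T b| +
        |flipMap 1 T a - flipMap 1 T b|) := by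
  obtain ⟨ha₁, ha₂⟩ := ha
  obtain ⟨hb₁, hb₂⟩ := hb
  unfold flipMap
  rcases abs_cases (a - b) with ⟨h, _⟩ | ⟨h, _⟩ <;> rw [h] <;> split_ifs <;> grind
end

section
/- Let V be a finite set with distinguished distinct vertices s, t ∈ V, let cap, dem : V × V → ℝ≥0 be symmetric functions vanishing on the diagonal, let T > 0, and let h : V → ℝ be a map with h(v) ∈ [−T/3, 4T/3] for all v ∈ V, h(s) = 0, and h(t) = T. Then there exists α ∈ {1/3, 1} such that the map h' = F_{α,T} ∘ h satisfies: h'(v) ∈ [0, T] for all v ∈ V, h'(s) = 0, h'(t) = T, Σ_{u,v∈V} dem(u,v)·|h'(u) − h'(v)| ≥ (1/6)·Σ_{u,v∈V} dem(u,v)·|h(u) − h(v)|, and Σ_{u,v∈V} cap(u,v)·|h'(u) − h'(v)| ≤ Σ_{u,v∈V} cap(u,v)·|h(u) − h(v)|. -/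
theorem flipMap_mem_Icc {α T x : ℝ} (hα0 : 0 ≤ α) (hα1 : α ≤ 1) (hT : 0 < T)
    (hx : x ∈ Set.Icc (-(T / 3)) (4 * T / 3)) : flipMap α T x ∈ Set.Icc 0 T := by
  obtain ⟨h1, h2⟩ := hx
  unfold flipMap
  split_ifs <;> constructor <;> nlinarith

theorem abs_flipMap_sub_le {α T : ℝ} (hα0 : 0 ≤ α) (hα1 : α ≤ 1) (hT : 0 < T) (x y : ℝ) :
    |flipMap α T x - flipMap α T y| ≤ |x - y| := by
  wlog hxy : y ≤ x generalizing x y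
  · rw [abs_sub_comm, abs_sub_comm x]
    exact this y x (le_of_not_ge hxy)
  rw [abs_of_nonneg (sub_nonneg.2 hxy), abs_le]
  unfold flipMap
  split_ifs <;> constructor <;> nlinarith

/-- The flips with `α = 1/3` and `α = 1` do not both collapse a pair of points. -/
theorem abs_sub_le_abs_flipMap_add {T x y : ℝ}
    (hx : x ∈ Set.Icc (-(T / 3)) (4 * T / 3)) (hy : y ∈ Set.Icc (-(T / 3)) (4 * T / 3)) :
    1 / 3 * |x - y| ≤
      |flipMap (1 / 3) T x - flipMap (1 / 3) T y| + |flipMap 1 T x - flipMap 1 T y| := by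
  wlog hxy : y ≤ x generalizing x y
  · rw [abs_sub_comm, abs_sub_comm (flipMap _ _ _), abs_sub_comm (flipMap 1 _ _)]
    exact this hy hx (le_of_not_ge hxy)
  obtain ⟨hx1, hx2⟩ := hx
  obtain ⟨hy1, hy2⟩ := hy
  rw [abs_of_nonneg (sub_nonneg.2 hxy)]
  rcases abs_cases (flipMap (1 / 3) T x - flipMap (1 / 3) T y) with ⟨e, h⟩ | ⟨e, h⟩ <;>
    rcases abs_cases (flipMap 1 T x - flipMap 1 T y) with ⟨e', h'⟩ | ⟨e', h'⟩ <;>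
    rw [e, e'] <;> clear e e' <;> unfold flipMap at * <;> split_ifs at * <;> linarith

/-- Step 2 (flipping) of Lemma 4.5: given `h : V → [−T/3, 4T/3]` with
`h(s) = 0` and `h(t) = T`, some `α ∈ {1/3, 1}` yields `h' = F_{α,T} ∘ h`
confined to `[0, T]`, still with `h'(s) = 0`, `h'(t) = T`, losing at most a
factor `6` in the demand-weighted lengths and not increasing the
capacity-weighted lengths. -/
theorem stmt17 {V : Type*} [Fintype V] [DecidableEq V] (s t : V) (hst : s ≠ t)
    (cap dem : V → V → ℝ)
    (hcap0 : ∀ u v, 0 ≤ cap u v) (hdem0 : ∀ u v, 0 ≤ dem u v)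
    (hcapsym : ∀ u v, cap u v = cap v u) (hdemsym : ∀ u v, dem u v = dem v u)
    (hcapdiag : ∀ v, cap v v = 0) (hdemdiag : ∀ v, dem v v = 0)
    (T : ℝ) (hT : 0 < T)
    (h : V → ℝ) (hrange : ∀ v, h v ∈ Set.Icc (-(T / 3)) (4 * T / 3))
    (hs : h s = 0) (ht : h t = T) :
    ∃ α : ℝ, (α = 1 / 3 ∨ α = 1) ∧
      (∀ v, flipMap α T (h v) ∈ Set.Icc (0 : ℝ) T) ∧
      flipMap α T (h s) = 0 ∧
      flipMap α T (h t) = T ∧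
      (1 / 6) * ∑ u, ∑ v, dem u v * |h u - h v| ≤
        ∑ u, ∑ v, dem u v * |flipMap α T (h u) - flipMap α T (h v)| ∧
      ∑ u, ∑ v, cap u v * |flipMap α T (h u) - flipMap α T (h v)| ≤
        ∑ u, ∑ v, cap u v * |h u - h v| := by
  have hsum : 1 / 3 * ∑ u, ∑ v, dem u v * |h u - h v| ≤
      ∑ u, ∑ v, dem u v * |flipMap (1 / 3) T (h u) - flipMap (1 / 3) T (h v)| +
        ∑ u, ∑ v, dem u v * |flipMap 1 T (h u) - flipMap 1 T (h v)| := by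
    simp only [Finset.mul_sum, ← Finset.sum_add_distrib]
    refine Finset.sum_le_sum fun u _ => Finset.sum_le_sum fun v _ => ?_
    have := mul_le_mul_of_nonneg_left
      (abs_sub_le_abs_flipMap_add (hrange u) (hrange v)) (hdem0 u v)
    linarith
  have hdem : ∃ α : ℝ, (α = 1 / 3 ∨ α = 1) ∧
      (1 / 6) * ∑ u, ∑ v, dem u v * |h u - h v| ≤
        ∑ u, ∑ v, dem u v * |flipMap α T (h u) - flipMap α T (h v)| := by
    by_contra! hcon
    have h1 := hcon (1 / 3) (Or.inl rfl)
    have h2 := hcon 1 (Or.inr rfl)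
    linarith
  obtain ⟨α, hα, hle⟩ := hdem
  have hα0 : 0 ≤ α := by rcases hα with rfl | rfl <;> norm_num
  have hα1 : α ≤ 1 := by rcases hα with rfl | rfl <;> norm_num
  refine ⟨α, hα, fun v => flipMap_mem_Icc hα0 hα1 hT (hrange v), ?_, ?_, hle, ?_⟩
  · simp [flipMap, hs, hT.not_gt]
  · simp [flipMap, ht, hT.not_gt]
  · exact Finset.sum_le_sum fun u _ => Finset.sum_le_sum fun v _ =>
      mul_le_mul_of_nonneg_left (abs_flipMap_sub_le hα0 hα1 hT _ _) (hcap0 u v)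
end

section
/- Let V be a finite set and cap : V × V → ℝ≥0 a symmetric function vanishing on the diagonal. Let A ⊆ V with 1 ≤ |A| ≤ |V∖A|, and let W ⊆ V with |W| < |A|/3. Put U = A∖W and Ū = (V∖A)∖W. Then min{|U|, |Ū|} > (2/3)·|A| and cap(U, Ū) ≤ cap(A, V∖A); consequently, the uniform sparsity of the induced cut satisfies cap(U, Ū)/min{|U|, |Ū|} ≤ (3/2)·cap(A, V∖A)/|A|. -/
/-- Content of Claim 5.3 (`clm_stdcase_aprx`): removing a set `W` with
`|W| < |A|/3` from both sides of a cut `(A, V∖A)` with `1 ≤ |A| ≤ |V∖A|`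
leaves sides `U = A∖W` and `Ū = (V∖A)∖W` with `min{|U|,|Ū|} > (2/3)|A|` and
`cap(U,Ū) ≤ cap(A,V∖A)`; hence the uniform sparsity of the induced cut is at
most `(3/2)·cap(A,V∖A)/|A|`. -/
theorem stmt19 {V : Type*} [Fintype V] [DecidableEq V]
    (cap : V → V → ℝ)
    (hcap0 : ∀ u v, 0 ≤ cap u v) (hcapsym : ∀ u v, cap u v = cap v u)
    (hcapdiag : ∀ v, cap v v = 0)
    (A W : Finset V) (hA1 : 1 ≤ A.card) (hA2 : A.card ≤ Aᶜ.card)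
    (hW : (W.card : ℝ) < (A.card : ℝ) / 3) :
    (2 / 3 : ℝ) * A.card <
      min (((A \ W).card : ℝ)) (((Aᶜ \ W).card : ℝ)) ∧
    (∑ u ∈ A \ W, ∑ v ∈ Aᶜ \ W, cap u v) ≤ (∑ u ∈ A, ∑ v ∈ Aᶜ, cap u v) ∧
    (∑ u ∈ A \ W, ∑ v ∈ Aᶜ \ W, cap u v) /
        min (((A \ W).card : ℝ)) (((Aᶜ \ W).card : ℝ)) ≤
      (3 / 2) * (∑ u ∈ A, ∑ v ∈ Aᶜ, cap u v) / A.card := by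
  have hcard : ∀ B : Finset V, (B.card : ℝ) ≤ (B \ W).card + W.card := fun B ↦ by
    exact_mod_cast Finset.card_le_card_sdiff_add_card
  have hApos : (0 : ℝ) < A.card := by exact_mod_cast hA1
  have hAcompl : (A.card : ℝ) ≤ Aᶜ.card := by exact_mod_cast hA2
  have hmin : (2 / 3 : ℝ) * A.card <
      min (((A \ W).card : ℝ)) (((Aᶜ \ W).card : ℝ)) :=
    lt_min (by linarith [hcard A]) (by linarith [hcard Aᶜ])
  have hsum : (∑ u ∈ A \ W, ∑ v ∈ Aᶜ \ W, cap u v) ≤ ∑ u ∈ A, ∑ v ∈ Aᶜ, cap u v :=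
    calc
      _ ≤ ∑ u ∈ A \ W, ∑ v ∈ Aᶜ, cap u v :=
        Finset.sum_le_sum fun u _ ↦
          Finset.sum_le_sum_of_subset_of_nonneg Finset.sdiff_subset fun v _ _ ↦ hcap0 u v
      _ ≤ _ :=
        Finset.sum_le_sum_of_subset_of_nonneg Finset.sdiff_subset fun u _ _ ↦
          Finset.sum_nonneg fun v _ ↦ hcap0 u v
  have hnonneg : 0 ≤ ∑ u ∈ A, ∑ v ∈ Aᶜ, cap u v :=
    Finset.sum_nonneg fun u _ ↦ Finset.sum_nonneg fun v _ ↦ hcap0 u v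
  refine ⟨hmin, hsum, ?_⟩
  calc
    _ ≤ (∑ u ∈ A, ∑ v ∈ Aᶜ, cap u v) / ((2 / 3 : ℝ) * A.card) :=
      div_le_div₀ hnonneg hsum (by positivity) hmin.le
    _ = _ := by field_simp
end
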